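/- Let k be a field of characteristic 2 containing no primitive cube root of unity (i.e., every ω ∈ k with ω³ = 1 satisfies ω = 1), and let G = Q_8 be the quaternion group of order 8. Suppose M_0, M_1, M_2, M_3 are finite-dimensional kG-modules such that M_0 is the trivial module k and, for each i = 0, 1, 2, there is a short exact sequence 0 → M_{i+1} → P_i → M_i → 0 of kG-modules with P_i finite-dimensional projective. Then each M_i is endotrivial, the modules M_0, M_1, M_2, M_3 are pairwise not stably isomorphic, and every endotrivial kG-module is stably isomorphic to M_i for some i ∈ {0,1,2,3}. In particular, the group of endotrivial modules of Q_8 (the Picard group of StMod(kQ_8)) is cyclic of order 4. -/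

import Mathlib

open CategoryTheory CategoryTheory.Limits MonoidalCategory

/-- A representation `M` of `G` over `k` is *endotrivial* if it is finite-dimensional over `k`
and its `k`-linear endomorphism module, with the conjugation `G`-action, is isomorphic to the
direct sum of the trivial representation `k` and a projective. -/
def IsEndotrivial {k G : Type} [Field k] [Group G] (M : Rep k G) : Prop :=
  FiniteDimensional k M.V ∧
    ∃ P : Rep k G, Projective P ∧
      Nonempty (Rep.of (M.ρ.linHom M.ρ) ≅ Rep.trivial k G k ⊞ P)

/-- Two representations are *stably isomorphic* if they become isomorphic after adding
projective summands. -/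
def IsStablyIso {k G : Type} [Field k] [Group G] (M N : Rep k G) : Prop :=
  ∃ P Q : Rep k G, Projective P ∧ Projective Q ∧ Nonempty (M ⊞ P ≅ N ⊞ Q)


/-- Operators `X = i - 1`, `Y = j - 1`, `Z = z - 1` of a `Q_8`-module in characteristic two. -/
structure QAct (k V : Type) [Field k] [AddCommGroup V] [Module k V] where
  X : V →ₗ[k] V
  Y : V →ₗ[k] V
  Z : V →ₗ[k] V
  XX : ∀ m, X (X m) = Z m
  YY : ∀ m, Y (Y m) = Z m
  YX : ∀ m, Y (X m) = X (Y m) + Z m + Z (X m) + Z (Y m) + Z (X (Y m))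
  XZ : ∀ m, X (Z m) = Z (X m)
  YZ : ∀ m, Y (Z m) = Z (Y m)
  ZZ : ∀ m, Z (Z m) = 0
  dbl : ∀ m : V, m + m = 0

set_option linter.unusedSimpArgs false
set_option linter.unusedSectionVars false

namespace QAct

variable {k V : Type} [Field k] [AddCommGroup V] [Module k V]

lemma neg_eq (q : QAct k V) (m : V) : -m = m := by
  rw [neg_eq_iff_add_eq_zero]; exact q.dbl m

lemma dbl' (q : QAct k V) (m n : V) : m + (m + n) = n := by rw [← add_assoc, q.dbl, zero_add]

lemma eq_of_add (q : QAct k V) {a b : V} (h : a + b = 0) : a = b := by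
  rw [eq_neg_of_add_eq_zero_left h, q.neg_eq]

lemma add_of_eq (q : QAct k V) {a b : V} (h : a = b) : a + b = 0 := by
  rw [h, q.dbl]

lemma lc1 (q : QAct k V) {a b c d : V} (h : c = d) (h' : a + b + (c + d) = 0) : a = b := by
  subst h; rw [q.dbl, add_zero] at h'; exact q.eq_of_add h'

lemma lc2 (q : QAct k V) {a b c d c' d' : V} (h : c = d) (h2 : c' = d')
    (h' : a + b + (c + d) + (c' + d') = 0) : a = b := by
  subst h h2; rw [q.dbl, q.dbl, add_zero, add_zero] at h'; exact q.eq_of_add h'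

lemma XYX (q : QAct k V) (m : V) : q.X (q.Y (q.X m)) = q.Z (q.Y m) + q.Z (q.X m) + q.Z (q.X (q.Y m)) := by
  rw [q.YX]; simp [q.XX, q.XZ, q.ZZ]

set_option maxHeartbeats 2000000 in
lemma key (q : QAct k V) (s v : V) (ε : k) (hXv : q.X v = 0) (hYv : q.Y v = ε • q.Z (q.X s))
    (hs : q.Z (q.X (q.Y s)) = 0)
    (hZ : ∀ m, q.Z m = 0 → ∃ n, ∃ c : k, m = q.Z n + c • v)
    (hX : ∀ m, q.Z (q.X m) = 0 → ∃ n, q.Z m = q.Z (q.X n)) :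
    ∃ (s' t a b w w' : V) (μ ν : k), q.Z (q.X s') = q.Z (q.X s) ∧
      q.Y s' = q.X t + q.Z a + μ • v ∧
      q.Y t = q.X (s' + t) + q.Z b + ν • v ∧
      q.Z (q.X ((ε * μ) • t + (1 + ε * μ + ε * ν) • s')) = q.Z (q.X (q.Y w)) ∧
      q.Z (q.X ((ε * μ) • (s' + t) + (1 + ε * μ + ε * ν) • t)) = q.Z (q.X (q.Y w')) := by
  have hZv : q.Z v = 0 := by rw [← q.XX, hXv, map_zero]

  -- step 1
  obtain ⟨t0, ht0⟩ := hX (q.Y s) (by rw [hs])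
  obtain ⟨a0, μ, h1⟩ := hZ (q.Y s + q.X t0) (by rw [map_add, ht0, q.dbl])
  -- step 2
  obtain ⟨s', hs'⟩ : ∃ s', s' = s + q.X a0 := ⟨_, rfl⟩
  obtain ⟨t, ht⟩ : ∃ t, t = t0 + q.Y a0 := ⟨_, rfl⟩
  obtain ⟨a, ha⟩ : ∃ a, a = q.X a0 + q.Y a0 + q.X (q.Y a0) := ⟨_, rfl⟩
  have e1 : q.Y s' = q.X t + q.Z a + μ • v := by
    subst hs' ht ha
    refine q.lc1 h1 ?_
    simp only [map_add, q.XX, q.YY, q.YX, q.XZ, q.YZ, q.ZZ, add_assoc, add_comm, add_left_comm,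
      q.dbl, q.dbl', add_zero, zero_add]
  have hZXs : q.Z (q.X s') = q.Z (q.X s) := by
    subst hs'; simp [q.XX, q.ZZ]
  have ea : q.Z (q.X (q.Y a)) = 0 := by
    subst ha; simp [q.XX, q.ZZ, q.YY, q.YX, q.XZ, q.YZ]
  rw [← hZXs] at hYv
  clear hs' ht ha h1 ht0 hs
  -- step 3
  have f1 : q.Z (q.Y s') = q.Z (q.X t) := by
    rw [e1]; simp [q.ZZ, hZv]
  have f2 : q.Z (q.X (q.Y t)) = 0 := by
    have := congrArg q.Y f1
    simp only [q.YZ, q.YY, q.ZZ, q.YX, map_add] at this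
    simpa using this.symm
  have f3 : q.Z (q.X (q.Y s')) = 0 := by
    rw [← q.XZ, f1, q.XZ, q.XX, q.ZZ]
  obtain ⟨r, hr⟩ := hX (q.Y t) f2
  obtain ⟨b0, ν, h2⟩ := hZ (q.Y t + q.X r) (by rw [map_add, hr, q.dbl])
  have e2' : q.Y t = q.X r + q.Z b0 + ν • v := by
    refine q.lc1 h2 ?_
    simp only [add_assoc, add_comm, add_left_comm, q.dbl, q.dbl', add_zero, zero_add]
  -- step 4
  have yyS : ∀ m, q.Z m = q.Y (q.Y m) := fun m => (q.YY m).symm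
  have h3 : q.Z (q.X (r + s' + t)) = 0 := by
    refine q.lc1 (congrArg q.X (congrArg q.Y e1)) ?_
    simp only [map_add, q.XX, q.YY, q.YX, q.XZ, q.YZ, q.ZZ, map_smul, hYv, e2', hZv, hXv, ea,
      smul_zero, map_zero, add_assoc, add_comm, add_left_comm, q.dbl, q.dbl', add_zero, zero_add]
  obtain ⟨n, hn⟩ := hX _ h3
  obtain ⟨n2, c, hn2⟩ := hZ (r + s' + t + q.X n) (by rw [map_add, hn, q.dbl])
  obtain ⟨b, hb⟩ : ∃ b, b = b0 + n + q.X n2 := ⟨_, rfl⟩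
  have e2 : q.Y t = q.X (s' + t) + q.Z b + ν • v := by
    subst hb
    refine q.lc2 e2' (congrArg q.X hn2) ?_
    simp only [map_add, q.XX, q.YY, q.YX, q.XZ, q.YZ, q.ZZ, map_smul, hYv, hZv, hXv, ea,
      smul_zero, map_zero, add_assoc, add_comm, add_left_comm, q.dbl, q.dbl', add_zero, zero_add]
  clear e2' h3 hn hn2 hr h2
  -- step 5
  have g2 : q.Z (q.X b + (1 + ε * μ) • q.X s' + q.Y a) = 0 := by
    refine q.lc1 (congrArg q.Y e1) ?_
    simp only [map_add, q.XX, q.YY, q.YX, q.XZ, q.YZ, q.ZZ, map_smul, hYv, e2, hZv, hXv, ea,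
      add_smul, mul_smul, one_smul, smul_comm μ ε,
      smul_zero, map_zero, add_assoc, add_comm, add_left_comm, q.dbl, q.dbl', add_zero, zero_add]
  have g3 : q.Z (q.X (a + b + t + (ε * ν) • s') + q.Y b) = 0 := by
    refine q.lc1 (q.YY t) ?_
    simp only [map_add, q.XX, q.YY, q.YX, q.XZ, q.YZ, q.ZZ, map_smul, hYv, e1, e2, hZv, hXv, ea,
      add_smul, mul_smul, one_smul, smul_comm ν ε,
      smul_zero, map_zero, add_assoc, add_comm, add_left_comm, q.dbl, q.dbl', add_zero, zero_add]
  obtain ⟨c1, d1, hc1⟩ := hZ _ g2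
  obtain ⟨c2, d2, hc2⟩ := hZ _ g3
  have e3 : q.Y a = q.X b + (1 + ε * μ) • q.X s' + q.Z c1 + d1 • v := by
    refine q.lc1 hc1 ?_
    simp only [add_assoc, add_comm, add_left_comm, q.dbl, q.dbl', add_zero, zero_add]
  have e4 : q.Y b = q.X (a + b + t + (ε * ν) • s') + q.Z c2 + d2 • v := by
    refine q.lc1 hc2 ?_
    simp only [add_assoc, add_comm, add_left_comm, q.dbl, q.dbl', add_zero, zero_add]
  have g1 : q.Z (q.Y s') = q.Z (q.X t) := f1
  have g4 : q.Z (q.Y b) = q.Z (q.X (a + b + t + (ε * ν) • s')) := by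
    rw [e4]; simp [q.ZZ, hZv]
  have g5 : q.Z (q.Y a) = q.Z (q.X b) + (1 + ε * μ) • q.Z (q.X s') := by
    rw [e3]; simp [q.ZZ, hZv]
  have g6 : q.Z (q.Y t) = q.Z (q.X (s' + t)) := by
    rw [e2]; simp [q.ZZ, hZv]
  refine ⟨s', t, a, b, b + c1, b + c2, μ, ν, hZXs, e1, e2, ?_, ?_⟩
  · have h := congrArg q.X (congrArg q.Y e3)
    simp only [map_add, map_smul, q.YY, q.YZ, q.XZ, hYv, q.XYX, q.XX, q.ZZ, smul_zero, add_zero]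
      at h
    rw [g1, f3, g4] at h
    refine q.lc1 h ?_
    simp only [map_add, map_smul, add_smul, mul_smul, one_smul, smul_add,
      smul_zero, map_zero, add_assoc, add_comm, add_left_comm, q.dbl, q.dbl', add_zero, zero_add]
  · have h := congrArg q.X (congrArg q.Y e4)
    simp only [map_add, map_smul, q.YY, q.YZ, q.XZ, hYv, q.XYX, q.XX, q.ZZ, smul_zero, add_zero]
      at h
    rw [f1, f2, f3, g4, g5, g6, ea] at h
    refine q.lc1 h ?_
    simp only [map_add, map_smul, add_smul, mul_smul, one_smul, smul_add,
      smul_zero, map_zero, add_assoc, add_comm, add_left_comm, q.dbl, q.dbl', add_zero, zero_add]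

end QAct


set_option linter.unusedSimpArgs false
set_option linter.unusedSectionVars false
namespace QAct

section basics
variable {k V : Type} [Field k] [AddCommGroup V] [Module k V] (q : QAct k V)

/-- free over the central subgroup -/
def ZFree : Prop := ∀ m, q.Z m = 0 → ∃ n, m = q.Z n

/-- the stable socle over the central subgroup is one-dimensional -/
def T1 : Prop := ∃ v, q.Z v = 0 ∧ (∀ n, v ≠ q.Z n) ∧ ∀ m, q.Z m = 0 → ∃ n, ∃ c : k, m = q.Z n + c • v

/-- the restriction to the first cyclic group of order four is stably trivial -/
def Ty1 : Prop := ∃ v, q.X v = 0 ∧ ∀ n, v ≠ q.Z n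

/-- a fixed vector outside the image of `Z` -/
def F0 : Prop := ∃ v, q.X v = 0 ∧ q.Y v = 0 ∧ ∀ n, v ≠ q.Z n

/-- a shifted fixed vector -/
def F1 : Prop := ∃ a b c, q.X a = c ∧ q.Y b = c ∧ q.Z c = 0 ∧
  q.X b + q.Y a = c + q.X c + q.Y c + q.Y (q.X c) ∧ ∀ n, c ≠ q.Z n

/-- a doubly shifted fixed vector -/
def F2 : Prop := ∃ p s, q.X p = q.Y s ∧
  ∀ n, q.Y p + q.X s + q.Y s + q.Y (q.X s) ≠ q.Z n

lemma ZYX (m : V) : q.Z (q.Y (q.X m)) = q.Z (q.X (q.Y m)) := by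
  rw [q.YX]; simp [q.ZZ]

lemma YXY (m : V) : q.Y (q.X (q.Y m)) = q.Z (q.Y m) + q.Z (q.X m) + q.Z (q.X (q.Y m)) := by
  rw [q.YX]; simp [q.YY, q.XZ, q.ZZ, add_comm]

variable {q}

lemma ZFree.X (h : q.ZFree) {m : V} (hm : q.X m = 0) : ∃ n, m = q.Z (q.X n) := by
  obtain ⟨n, rfl⟩ := h m (by rw [← q.XX, hm, map_zero])
  rw [q.XZ] at hm
  obtain ⟨n', hn'⟩ := h _ hm
  refine ⟨n', ?_⟩
  rw [← q.XX n, hn', q.XZ]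

lemma ZFree.Y (h : q.ZFree) {m : V} (hm : q.Y m = 0) : ∃ n, m = q.Z (q.Y n) := by
  obtain ⟨n, rfl⟩ := h m (by rw [← q.YY, hm, map_zero])
  rw [q.YZ] at hm
  obtain ⟨n', hn'⟩ := h _ hm
  refine ⟨n', ?_⟩
  rw [← q.YY n, hn', q.YZ]

lemma ZFree.ZX (h : q.ZFree) {m : V} (hm : q.Z (q.X m) = 0) : ∃ n, m = q.X n := by
  obtain ⟨n, hn⟩ := h.X (m := q.Z m) (by rw [q.XZ, hm])
  obtain ⟨n', hn'⟩ := h (m + q.X n) (by rw [map_add, hn, q.dbl])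
  exact ⟨n + q.X n', by rw [map_add, q.XX, ← hn', add_comm m, q.dbl']⟩

lemma ZFree.ZXY (h : q.ZFree) {m : V} (hm : q.Z (q.X (q.Y m)) = 0) :
    ∃ w, q.Z (q.X m) = q.Z (q.X (q.Y w)) := by
  obtain ⟨s', t, a, b, w, w', μ, ν, h1, h2, h3, h4, h5⟩ := q.key m 0 0 (by simp) (by simp) hm
    (fun m hm => by obtain ⟨n, hn⟩ := h m hm; exact ⟨n, 0, by simpa using hn⟩)
    (fun m hm => by obtain ⟨n, rfl⟩ := h.ZX hm; exact ⟨n, rfl⟩)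
  refine ⟨w, ?_⟩
  rw [← h1]; simpa using h4

lemma ZFree.rad (h : q.ZFree) {m : V} (hm : q.Z (q.X (q.Y m)) = 0) :
    ∃ a b, m = q.X a + q.Y b := by
  obtain ⟨w, hw⟩ := h.ZXY hm
  obtain ⟨a, ha⟩ := h.ZX (m := m + q.Y w) (by rw [map_add, map_add, hw, q.dbl])
  exact ⟨a, w, by rw [← ha, add_assoc, q.dbl, add_zero]⟩

lemma ZFree.fix (h : q.ZFree) {m : V} (hX : q.X m = 0) (hY : q.Y m = 0) :
    ∃ n, m = q.Z (q.X (q.Y n)) := by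
  obtain ⟨n, rfl⟩ := h.X hX
  refine h.ZXY ?_
  rw [← q.ZYX, ← q.YZ, hY]

end basics

/-- homomorphisms -/
structure Hom {k V W : Type} [Field k] [AddCommGroup V] [Module k V] [AddCommGroup W] [Module k W]
    (q : QAct k V) (r : QAct k W) where
  f : V →ₗ[k] W
  hX : ∀ m, f (q.X m) = r.X (f m)
  hY : ∀ m, f (q.Y m) = r.Y (f m)

section hom
variable {k V W : Type} [Field k] [AddCommGroup V] [Module k V] [AddCommGroup W] [Module k W]
    {q : QAct k V} {r : QAct k W}

lemma Hom.hZ (φ : Hom q r) (m : V) : φ.f (q.Z m) = r.Z (φ.f m) := by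
  rw [← q.XX, φ.hX, φ.hX, r.XX]

/-- a homomorphism inducing a nonzero map on stable socles -/
def Hom.Good (φ : Hom q r) : Prop := ∃ v, q.Z v = 0 ∧ ∀ n, φ.f v ≠ r.Z n

/-- a homomorphism inducing an injective map on stable socles -/
def Hom.Inj (φ : Hom q r) : Prop := ∀ v, q.Z v = 0 → (∃ n, φ.f v = r.Z n) → ∃ n, v = q.Z n

lemma Hom.Inj.Ty1 {φ : Hom q r} (h : φ.Inj) (hq : q.Ty1) : r.Ty1 := by
  obtain ⟨v, h1, h2⟩ := hq
  refine ⟨φ.f v, by rw [← φ.hX, h1, map_zero], fun n hn => ?_⟩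
  obtain ⟨n, hn⟩ := h v (by rw [← q.XX, h1, map_zero]) ⟨n, hn⟩
  exact h2 n hn

lemma Hom.Inj.F0 {φ : Hom q r} (h : φ.Inj) (hq : q.F0) : r.F0 := by
  obtain ⟨v, h1, h3, h2⟩ := hq
  refine ⟨φ.f v, by rw [← φ.hX, h1, map_zero], by rw [← φ.hY, h3, map_zero], fun n hn => ?_⟩
  obtain ⟨n, hn⟩ := h v (by rw [← q.XX, h1, map_zero]) ⟨n, hn⟩
  exact h2 n hn

lemma Hom.Inj.F1 {φ : Hom q r} (h : φ.Inj) (hq : q.F1) : r.F1 := by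
  obtain ⟨a, b, c, h1, h2, h3, h4, h5⟩ := hq
  refine ⟨φ.f a, φ.f b, φ.f c, by rw [← φ.hX, h1], by rw [← φ.hY, h2], by rw [← φ.hZ, h3, map_zero],
    ?_, fun n hn => ?_⟩
  · rw [← φ.hX, ← φ.hY, ← φ.hX, ← φ.hY, ← φ.hY, ← map_add, h4]; simp
  · obtain ⟨n, hn⟩ := h c h3 ⟨n, hn⟩
    exact h5 n hn

end hom
end QAct


set_option linter.unusedSimpArgs false
set_option linter.unusedSectionVars false
namespace QAct

/-- short exact sequences -/
structure SES {k U V W : Type} [Field k] [AddCommGroup U] [Module k U]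
    [AddCommGroup V] [Module k V] [AddCommGroup W] [Module k W]
    (q' : QAct k U) (p : QAct k V) (q : QAct k W) where
  i : Hom q' p
  g : Hom p q
  inj : Function.Injective i.f
  surj : Function.Surjective g.f
  zero : ∀ a, g.f (i.f a) = 0
  ex : ∀ x, g.f x = 0 → ∃ a, i.f a = x

section
variable {k V : Type} [Field k] [AddCommGroup V] [Module k V] {q : QAct k V}

lemma z2 (q : QAct k V) (m : V) : (2 : ℤ) • m = 0 := by rw [two_zsmul, q.dbl]
lemma z4 (q : QAct k V) (m : V) : (4 : ℤ) • m = 0 := by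
  rw [show (4 : ℤ) = 2 * 2 by norm_num, mul_smul, q.z2]
lemma z6 (q : QAct k V) (m : V) : (6 : ℤ) • m = 0 := by
  rw [show (6 : ℤ) = 2 * 3 by norm_num, mul_smul, q.z2]

lemma z8 (q : QAct k V) (m : V) : (8 : ℤ) • m = 0 := by
  rw [show (8 : ℤ) = 2 * 4 by norm_num, mul_smul, q.z2]

lemma T1.gen (h : q.T1) {v : V} (hv : q.Z v = 0) (hv' : ∀ n, v ≠ q.Z n) :
    ∀ m, q.Z m = 0 → ∃ n, ∃ c : k, m = q.Z n + c • v := by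
  obtain ⟨w, h1, h2, h3⟩ := h
  obtain ⟨n, c, hc⟩ := h3 v hv
  have hc0 : c ≠ 0 := by
    rintro rfl
    exact hv' n (by simpa using hc)
  intro m hm
  obtain ⟨n', c', hc'⟩ := h3 m hm
  refine ⟨n' - (c' / c) • n, c' / c, ?_⟩
  rw [hc, hc', map_sub, map_smul, smul_add, smul_smul, div_mul_cancel₀ _ hc0]
  abel

end

section
variable {k U V W : Type} [Field k] [AddCommGroup U] [Module k U]
    [AddCommGroup V] [Module k V] [AddCommGroup W] [Module k W]
    {q' : QAct k U} {p : QAct k V} {q : QAct k W}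

lemma SES.push (S : SES q' p q) {x : V} (n : W) (hx : S.g.f x = q.Z n) :
    ∃ u, p.Z x = S.i.f (q'.Z u) := by
  obtain ⟨y, rfl⟩ := S.surj n
  obtain ⟨u, hu⟩ := S.ex (x + p.Z y) (by rw [map_add, hx, S.g.hZ, q.dbl])
  exact ⟨u, by rw [S.i.hZ, hu, map_add, p.ZZ, add_zero]⟩

lemma SES.T1_down (S : SES q' p q) (hp : p.ZFree) (h : q.T1) : q'.T1 := by
  obtain ⟨v, h1, h2, h3⟩ := h
  obtain ⟨x, rfl⟩ := S.surj v
  obtain ⟨v', hv'⟩ := S.ex (p.Z x) (by rw [S.g.hZ, h1])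
  refine ⟨v', S.inj ?_, fun n hn => ?_, fun m hm => ?_⟩
  · rw [S.i.hZ, hv', p.ZZ, map_zero]
  · rw [hn, S.i.hZ] at hv'
    obtain ⟨y, hy⟩ := hp (S.i.f n + x) (by rw [map_add, hv', p.dbl])
    refine h2 (S.g.f y) ?_
    rw [← S.g.hZ, ← hy, map_add, S.zero, zero_add]
  · obtain ⟨y, hy⟩ := hp (S.i.f m) (by rw [← S.i.hZ, hm, map_zero])
    obtain ⟨n, c, hc⟩ := h3 (S.g.f y) (by rw [← S.g.hZ, ← hy, S.zero])
    obtain ⟨u, hu⟩ := S.push (x := y - c • x) n (by rw [map_sub, map_smul, hc]; abel)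
    refine ⟨u, c, S.inj ?_⟩
    rw [map_add, map_smul, ← hu, hv', map_sub, map_smul, hy]; abel

lemma SES.T1_up (S : SES q' p q) (hp : p.ZFree) (h : q'.T1) : q.T1 := by
  obtain ⟨v', h1, h2, h3⟩ := h
  obtain ⟨x, hx⟩ := hp (S.i.f v') (by rw [← S.i.hZ, h1, map_zero])
  refine ⟨S.g.f x, ?_, fun n hn => ?_, fun m hm => ?_⟩
  · rw [← S.g.hZ, ← hx, S.zero]
  · obtain ⟨u, hu⟩ := S.push n hn
    exact h2 u (S.inj (by rw [← hu, hx]))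
  · obtain ⟨y, rfl⟩ := S.surj m
    obtain ⟨m', hm'⟩ := S.ex (p.Z y) (by rw [S.g.hZ, hm])
    obtain ⟨n, c, hc⟩ := h3 m' (S.inj (by rw [S.i.hZ, hm', p.ZZ, map_zero]))
    obtain ⟨y', hy'⟩ := hp (y - S.i.f n - c • x) (by
      rw [map_sub, map_sub, map_smul, ← hx, ← hm', hc, map_add, map_smul, S.i.hZ]; abel)
    refine ⟨S.g.f y', c, ?_⟩
    rw [← S.g.hZ, ← hy', map_sub, map_sub, S.zero, map_smul]; abel

lemma SES.not_both (S : SES q' p q) (hp : p.ZFree) (h : q.T1) (h1 : q.Ty1) (h2 : q'.Ty1) :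
    False := by
  obtain ⟨v, a1, a2⟩ := h1
  obtain ⟨v', b1, b2⟩ := h2
  have hv : q.Z v = 0 := by rw [← q.XX, a1, map_zero]
  have hv' : q'.Z v' = 0 := by rw [← q'.XX, b1, map_zero]
  obtain ⟨x, hx⟩ := hp (S.i.f v') (by rw [← S.i.hZ, hv', map_zero])
  obtain ⟨n, c, hc⟩ := h.gen hv a2 (S.g.f x) (by rw [← S.g.hZ, ← hx, S.zero])
  obtain ⟨y, rfl⟩ := S.surj n
  obtain ⟨u, hu⟩ := S.ex (p.X (x + p.Z y)) (by
    rw [S.g.hX, map_add, hc, S.g.hZ, add_comm, q.dbl', map_smul, a1, smul_zero])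
  have hXu : q'.X u = v' := S.inj (by
    rw [S.i.hX, hu, p.XX, map_add, p.ZZ, add_zero, hx])
  obtain ⟨n, d, hd⟩ := (S.T1_down hp h).gen hv' b2 u (by rw [← q'.XX, hXu, b1])
  refine b2 (q'.X n) ?_
  rw [← hXu, hd, map_add, map_smul, b1, q'.XZ, smul_zero, add_zero]

lemma SES.one_of (S : SES q' p q) (h : q.T1) (hp : p.ZFree) : q.Ty1 ∨ q'.Ty1 := by
  obtain ⟨v, h1, h2, h3⟩ := h
  obtain ⟨n, c, hc⟩ := h3 (q.X v) (by rw [← q.XZ, h1, map_zero])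
  have hc0 : c = 0 := by
    by_contra hc0
    have h4 := congrArg q.X hc
    rw [q.XX, h1, map_add, map_smul, hc] at h4
    refine h2 (c⁻¹ • n + (c⁻¹ * c⁻¹) • q.X n) ?_
    have h5 : v = -(c⁻¹ • q.Z n + (c⁻¹ * c⁻¹) • q.Z (q.X n)) := by
      rw [q.XZ] at h4
      have h6 : (c⁻¹ * c⁻¹) • (q.Z (q.X n) + c • (q.Z n + c • v)) = 0 := by rw [← h4, smul_zero]
      rw [smul_add, smul_smul, smul_add, smul_smul, mul_assoc, inv_mul_cancel₀ hc0, mul_one,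
        inv_mul_cancel₀ hc0, one_smul] at h6
      rw [eq_neg_iff_add_eq_zero, ← h6]; abel
    rw [q.neg_eq] at h5
    simpa using h5
  rw [hc0, zero_smul, add_zero, ← q.XX] at hc
  by_cases hb : ∃ b, v + q.X n = q.Z b
  · right
    obtain ⟨b, hb⟩ := hb
    obtain ⟨x, rfl⟩ := S.surj v
    obtain ⟨m, rfl⟩ := S.surj n
    obtain ⟨v', hv'⟩ := S.ex (p.Z x) (by rw [S.g.hZ, h1])
    obtain ⟨u, hu⟩ := S.push (x := x + p.X m) b (by rw [map_add, S.g.hX, hb])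
    have e : S.i.f (v' + q'.Z u) = p.Z (p.X m) := by
      rw [map_add, hv', ← hu, map_add, p.dbl']
    refine ⟨v' + q'.Z u, S.inj ?_, fun w hw => ?_⟩
    · rw [S.i.hX, e, p.XZ, p.XX, p.ZZ, map_zero]
    · have : v' = q'.Z (u + w) := by
        rw [map_add, ← hw, add_comm v', q'.dbl']
      rw [this, S.i.hZ] at hv'
      obtain ⟨y, hy⟩ := hp (S.i.f (u + w) + x) (by rw [map_add, hv', p.dbl])
      refine h2 (S.g.f y) ?_
      rw [← S.g.hZ, ← hy, map_add, S.zero, zero_add]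
  · left
    push Not at hb
    exact ⟨v + q.X n, by rw [map_add, hc, q.dbl], hb⟩

lemma SES.F1_F0 (S : SES q' p q) (hp : p.ZFree) (h : q'.F1) : q.F0 := by
  obtain ⟨a, b, c, h1, h2, h3, h4, h5⟩ := h
  obtain ⟨x, hx⟩ := hp (S.i.f c) (by rw [← S.i.hZ, h3, map_zero])
  have k1 : p.X (S.i.f a + p.X x) = 0 := by rw [map_add, ← S.i.hX, h1, hx, p.XX, p.dbl]
  have k2 : p.Y (S.i.f b + p.Y x) = 0 := by rw [map_add, ← S.i.hY, h2, hx, p.YY, p.dbl]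
  have k3 : p.X (S.i.f b + p.Y x) = p.Y (S.i.f a + p.X x) := by
    have h := congrArg S.i.f h4
    simp only [map_add, S.i.hX, S.i.hY, hx] at h
    refine p.lc1 h ?_
    simp only [map_add, p.XX, p.YY, p.YX, p.XZ, p.YZ, p.ZZ, map_zero, add_zero, zero_add]; abel_nf; simp only [p.z2, p.z4, p.z6, add_zero, zero_add]
  obtain ⟨a', ha'⟩ := hp.X k1
  obtain ⟨b', hb'⟩ := hp.Y k2
  rw [ha', hb', p.XZ, p.YZ, p.ZYX] at k3
  obtain ⟨r, s, hrs⟩ := hp.rad (m := a' + b') (by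
    rw [map_add, map_add, map_add, k3, p.dbl])
  have hrs' : a' + p.X r = b' + p.Y s := by
    refine p.lc1 hrs ?_
    simp only [add_assoc, add_comm, add_left_comm, p.dbl, p.dbl', add_zero, zero_add]
  refine ⟨S.g.f (x + p.Z (a' + p.X r)), ?_, ?_, fun n hn => ?_⟩
  · rw [← S.g.hX, map_add, p.XZ, map_add p.X, p.XX, map_add p.Z, p.ZZ, add_zero, ← ha', add_comm,
      add_assoc, p.dbl, add_zero, S.zero]
  · rw [hrs', ← S.g.hY, map_add, p.YZ, map_add p.Y, p.YY, map_add p.Z, p.ZZ, add_zero, ← hb', add_comm,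
      add_assoc, p.dbl, add_zero, S.zero]
  · obtain ⟨u, hu⟩ := S.push n hn
    rw [map_add, p.ZZ, add_zero, ← hx] at hu
    exact h5 u (S.inj hu)

set_option maxHeartbeats 2000000 in
lemma SES.F2_F1 (S : SES q' p q) (hp : p.ZFree) (h : q'.F2) : q.F1 := by
  obtain ⟨P, Q, h1, h2⟩ := h
  have h1' := congrArg S.i.f h1
  rw [S.i.hX, S.i.hY] at h1'
  obtain ⟨s0, r0, hq0⟩ := hp.rad (m := S.i.f Q) (by rw [← h1', p.XX, p.ZZ])
  obtain ⟨m, hm⟩ := hp.X (m := S.i.f P + p.X r0 + p.Y s0 + p.X s0 + p.Z s0 + p.X (p.Y s0)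
      + p.X (p.Y (p.X s0)) + p.Z (p.X (s0 + p.Y s0))) (by
    rw [hq0] at h1'
    refine p.lc1 h1' ?_
    simp only [map_add, p.XX, p.YY, p.YX, p.XZ, p.YZ, p.ZZ, map_zero, add_zero, zero_add]; abel_nf; simp only [p.z2, p.z4, p.z6, add_zero, zero_add])
  obtain ⟨x, hx⟩ : ∃ x, x = m + s0 + p.Y s0 := ⟨_, rfl⟩
  obtain ⟨s, hs⟩ : ∃ s, s = s0 + p.Y x := ⟨_, rfl⟩
  obtain ⟨r, hr⟩ : ∃ r, r = r0 + p.X x + p.Y x + p.Y (p.X x) + p.Z x + p.Z (p.X x) := ⟨_, rfl⟩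
  have eP : S.i.f P = p.X r + p.Y s + p.X s + p.Z s + p.X (p.Y s) + p.X (p.Y (p.X s)) := by
    subst hs hr
    refine p.lc2 hm (congrArg p.Z (congrArg p.X hx)) ?_
    simp only [map_add, p.XX, p.YY, p.YX, p.XZ, p.YZ, p.ZZ, map_zero, add_zero, zero_add]; abel_nf; simp only [p.z2, p.z4, p.z6, add_zero, zero_add]
  have eQ : S.i.f Q = p.Y r + p.X s := by
    subst hs hr
    refine p.lc1 hq0 ?_
    simp only [map_add, p.XX, p.YY, p.YX, p.XZ, p.YZ, p.ZZ, map_zero, add_zero, zero_add]; abel_nf; simp only [p.z2, p.z4, p.z6, add_zero, zero_add]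
  clear hm hx hs hr hq0
  have eK : S.i.f (q'.Y P + q'.X Q + q'.Y Q + q'.Y (q'.X Q)) = p.Z (p.X s + p.Y s) := by
    simp only [map_add, S.i.hX, S.i.hY]
    rw [eP, eQ]
    refine p.eq_of_add ?_
    simp only [map_add, p.XX, p.YY, p.YX, p.XZ, p.YZ, p.ZZ, map_zero, add_zero, zero_add]; abel_nf; simp only [p.z2, p.z4, p.z6, add_zero, zero_add]
  have gP := congrArg S.g.f eP
  have gQ := congrArg S.g.f eQ
  have gK := congrArg S.g.f eK
  rw [S.zero] at gP gQ gK
  simp only [map_add, S.g.hX, S.g.hY, S.g.hZ] at gP gQ gK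
  have gQ' := q.eq_of_add gQ.symm
  refine ⟨S.g.f (r + p.X s + p.Y s + p.Y (p.X s)), S.g.f (r + s), S.g.f (p.X s + p.Y s),
    ?_, ?_, ?_, ?_, fun n hn => ?_⟩
  · simp only [map_add, S.g.hX, S.g.hY, S.g.hZ]
    refine q.lc1 gP ?_
    simp only [map_add, q.XX, q.YY, q.YX, q.XZ, q.YZ, q.ZZ, map_zero, add_zero, zero_add]; abel_nf; simp only [q.z2, q.z4, q.z6, q.z8, add_zero, zero_add]
  · simp only [map_add, S.g.hX, S.g.hY, S.g.hZ]
    rw [gQ']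
  · simp only [map_add, S.g.hX, S.g.hY, S.g.hZ]
    rw [gK]
  · simp only [map_add, S.g.hX, S.g.hY, S.g.hZ]
    rw [gQ']
    refine q.lc2 gP gK ?_
    simp only [map_add, q.XX, q.YY, q.YX, q.XZ, q.YZ, q.ZZ, map_zero, add_zero, zero_add]; abel_nf; simp only [q.z2, q.z4, q.z6, q.z8, add_zero, zero_add]
  · obtain ⟨u, hu⟩ := S.push n hn
    exact h2 u (S.inj (by rw [eK, hu]))

end

section
variable {k U V W U' V' : Type} [Field k] [AddCommGroup U] [Module k U]
    [AddCommGroup V] [Module k V] [AddCommGroup W] [Module k W]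
    [AddCommGroup U'] [Module k U'] [AddCommGroup V'] [Module k V']
    {q' : QAct k U} {p : QAct k V} {q : QAct k W} {r' : QAct k U'} {t : QAct k V'}

lemma SES.not_F0 (S : SES q' p q) (T : SES r' t q') (hp : p.ZFree) (ht : t.ZFree)
    (hX : ∀ m, q.X m = 0) (hY : ∀ m, q.Y m = 0) : ¬ r'.F0 := by
  rintro ⟨v, h1, h2, h3⟩
  obtain ⟨x, hx⟩ := ht.fix (m := T.i.f v) (by rw [← T.i.hX, h1, map_zero])
    (by rw [← T.i.hY, h2, map_zero])
  have h4 : q'.Z (q'.X (q'.Y (T.g.f x))) = 0 := by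
    rw [← T.g.hY, ← T.g.hX, ← T.g.hZ, ← hx, T.zero]
  obtain ⟨a, b, hab⟩ := hp.rad (m := S.i.f (T.g.f x)) (by
    rw [← S.i.hY, ← S.i.hX, ← S.i.hZ, h4, map_zero])
  obtain ⟨r, hr⟩ := S.ex (p.Y a + p.X a + p.X (p.Y a) + p.X b) (by
    simp [S.g.hX, S.g.hY, hX, hY])
  obtain ⟨u, hu⟩ := T.push (x := t.X (t.Y x)) r (S.inj (by
    rw [T.g.hX, T.g.hY, S.i.hX, S.i.hY, hab, S.i.hZ, hr]
    simp only [map_add, p.XYX, p.YY, p.XZ]))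
  exact h3 u (T.inj (by rw [hx, hu]))

end

section
variable {k U V W U' V' W' : Type} [Field k] [AddCommGroup U] [Module k U]
    [AddCommGroup V] [Module k V] [AddCommGroup W] [Module k W]
    [AddCommGroup U'] [Module k U'] [AddCommGroup V'] [Module k V'] [AddCommGroup W'] [Module k W']
    {q' : QAct k U} {p : QAct k V} {q : QAct k W} {r' : QAct k U'} {t : QAct k V'} {r : QAct k W'}

lemma SES.shift (S : SES q' p q) (T : SES r' t r) (ht : t.ZFree) (φ : Hom q r) (hφ : φ.Good)
    (ψ : Hom p t) (hc : ∀ x, T.g.f (ψ.f x) = φ.f (S.g.f x)) : ∃ φ' : Hom q' r', φ'.Good := by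
  have hex : ∀ a, ∃ b, T.i.f b = ψ.f (S.i.f a) := fun a => T.ex _ (by rw [hc, S.zero, map_zero])
  choose F hF using hex
  let φ' : Hom q' r' :=
    { f := 
       { toFun := F
         map_add' := fun a b => T.inj (by simp only [map_add, hF])
         map_smul' := fun c a => T.inj (by simp only [map_smul, hF, RingHom.id_apply]) }
      hX := fun m => T.inj (by
        change T.i.f (F _) = T.i.f (r'.X (F _))
        rw [hF, T.i.hX, hF, S.i.hX, ψ.hX])
      hY := fun m => T.inj (by
        change T.i.f (F _) = T.i.f (r'.Y (F _))
        rw [hF, T.i.hY, hF, S.i.hY, ψ.hY]) }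
  refine ⟨φ', ?_⟩
  obtain ⟨v, h1, h2⟩ := hφ
  obtain ⟨x, rfl⟩ := S.surj v
  obtain ⟨v', hv'⟩ := S.ex (p.Z x) (by rw [S.g.hZ, h1])
  refine ⟨v', S.inj ?_, fun n (hn : F v' = _) => ?_⟩
  · rw [S.i.hZ, hv', p.ZZ, map_zero]
  · have h4 := hF v'
    rw [hn, hv', ψ.hZ, T.i.hZ] at h4
    obtain ⟨y, hy⟩ := ht (T.i.f n + ψ.f x) (by rw [map_add, h4, t.dbl])
    refine h2 (T.g.f y) ?_
    rw [← hc, ← T.g.hZ, ← hy, map_add, T.zero, zero_add]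

end

section
variable {k V : Type} [Field k] [AddCommGroup V] [Module k V] {q : QAct k V}

lemma ty1_cases (hk : ∀ ω : k, ω ^ 3 = 1 → ω = 1) [CharP k 2] (h : q.T1) (h1 : q.Ty1) :
    q.F0 ∨ q.F2 := by
  obtain ⟨v, hXv, hv⟩ := h1
  have hZv : q.Z v = 0 := by rw [← q.XX, hXv, map_zero]
  have hZ := h.gen hZv hv
  have h2 : (2 : k) = 0 := CharTwo.two_eq_zero
  have hX : ∀ m, q.Z (q.X m) = 0 → ∃ n, q.Z m = q.Z (q.X n) := by
    intro m hm
    obtain ⟨n, c, hc⟩ := hZ (q.X m) hm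
    have hc' := congrArg q.X hc
    rw [q.XX, map_add, map_smul, hXv, smul_zero, add_zero, q.XZ] at hc'
    exact ⟨n, hc'⟩
  -- Y v
  obtain ⟨s, hYv⟩ : ∃ s, q.Y v = q.Z (q.X s) := by
    obtain ⟨n, c, hc⟩ := hZ (q.Y v) (by rw [← q.YZ, hZv, map_zero])
    have hXY : q.X (q.Y v) = 0 := by
      have := q.YX v
      rw [hXv, map_zero, map_zero, add_zero, hZv, add_zero, ← q.YZ, hZv, map_zero, add_zero,
        ← q.XZ, ← q.YZ, hZv, map_zero, map_zero, add_zero] at this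
      exact this.symm
    rw [hc, map_add, map_smul, hXv, smul_zero, add_zero, q.XZ] at hXY
    obtain ⟨s, hs⟩ := hX n hXY
    rw [hs] at hc
    by_cases hc0 : c = 0
    · exact ⟨s, by rw [hc, hc0, zero_smul, add_zero]⟩
    exfalso
    have h3 := congrArg q.Y hc
    rw [q.YY, hZv, map_add, map_smul, hc, q.YZ, q.ZYX, smul_add, smul_smul] at h3
    refine hv ((c * c)⁻¹ • (q.X (q.Y s)) + c⁻¹ • q.X s) ?_
    have h6 : (c * c)⁻¹ • (q.Z (q.X (q.Y s)) + (c • q.Z (q.X s) + (c * c) • v)) = 0 := by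
      rw [← h3, smul_zero]
    rw [smul_add, smul_add, smul_smul, smul_smul, inv_mul_cancel₀ (mul_ne_zero hc0 hc0),
      one_smul, mul_inv, mul_assoc, inv_mul_cancel₀ hc0, mul_one, ← add_assoc] at h6
    rw [map_add, map_smul, map_smul, mul_inv]
    exact (q.eq_of_add h6).symm
  have hs : q.Z (q.X (q.Y s)) = 0 := by
    rw [← q.ZYX, ← q.YZ, ← hYv, q.YY, hZv]
  obtain ⟨s', t, a, b, w, w', μ, ν, k1, k2, k3, k4, k5⟩ :=
    q.key s v 1 hXv (by rw [one_smul, hYv]) hs hZ hX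
  rw [← k1] at hYv
  simp only [one_mul] at k4 k5
  obtain ⟨β, hβ⟩ : ∃ β, β = 1 + μ + ν := ⟨_, rfl⟩
  rw [← hβ] at k4 k5
  by_cases hd : μ * μ + μ * β + β * β = 0
  · right
    have hμ : μ = 0 := by
      by_contra hμ
      have h3 : (β / μ) ^ 3 = 1 := by
        rw [div_pow, div_eq_one_iff_eq (pow_ne_zero 3 hμ)]
        linear_combination (β - μ) * hd
      have h4 := hk _ h3
      rw [div_eq_one_iff_eq hμ] at h4
      rw [h4] at hd
      apply hμ
      have : μ * μ = 0 := by linear_combination hd - μ * μ * h2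
      simpa using this
    have hβ0 : β = 0 := by
      rw [hμ] at hd
      simpa using hd
    have hν : ν = 1 := by
      rw [hβ0, hμ] at hβ
      linear_combination -hβ - h2
    rw [hμ, zero_smul, add_zero] at k2
    rw [hν, one_smul] at k3
    refine ⟨t + q.X a, s', by rw [map_add, q.XX, k2], fun n hn => ?_⟩
    have g1 : q.Z (q.Y s') = q.Z (q.X t) := by rw [k2]; simp [q.ZZ]
    have g2 : q.Z (q.X (q.Y s')) = 0 := by rw [← q.XZ, g1, q.XZ, q.XX, q.ZZ]
    have g3 : q.Z (q.Y t) = q.Z (q.X s') + q.Z (q.X t) := by rw [k3]; simp [q.ZZ, hZv]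
    have g4 : q.Z (q.X (q.Y t)) = 0 := by rw [← q.XZ, g3]; simp [q.XZ, q.XX, q.ZZ]
    have g5 : q.X (q.Y t) = q.Z s' + q.Z t + q.Z (q.X b) := by
      rw [k3]; simp [q.XX, q.XZ, hXv]
    have g6 : q.X (q.Y s') = q.Z t + q.Z (q.X a) := by
      rw [k2]; simp [q.XX, q.XZ]
    obtain ⟨c, d, hc⟩ := hZ (q.Y a + q.X b + q.X s') (by
      have h3 := congrArg q.Y k2
      rw [map_add, q.YY, q.YX, g4, g5, g3, q.YZ] at h3
      refine q.lc1 h3 ?_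
      simp only [map_add, add_zero, zero_add]; abel_nf; simp only [q.z2, q.z4, q.z6, q.z8, add_zero, zero_add])
    have g7 := congrArg q.X hc
    simp only [map_add, map_smul, q.XX, q.XZ, hXv, smul_zero, add_zero] at g7
    rw [q.YX s', g2, g1, g6, map_add, k3, q.YX a, k2] at hn
    refine hv (n + b + t + s' + q.Y a + q.X (q.Y a) + q.X s' + q.X t + b + s' + q.X c) ?_
    refine q.lc2 hn g7 ?_
    simp only [map_add, add_zero, zero_add]; abel_nf; simp only [q.z2, q.z4, q.z6, q.z8, add_zero, zero_add]
  · left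
    obtain ⟨h, hh⟩ : ∃ h, q.Z (q.X s') = q.Z (q.X (q.Y h)) := by
      refine ⟨(μ * μ + μ * β + β * β)⁻¹ • ((μ + β) • w + μ • w'), ?_⟩
      have h3 : (μ + β) • q.Z (q.X (q.Y w)) + μ • q.Z (q.X (q.Y w')) =
          (μ * μ + μ * β + β * β) • q.Z (q.X s') := by
        rw [← k4, ← k5]
        simp only [map_add, map_smul]
        refine q.eq_of_add ?_
        simp only [smul_add, add_smul, smul_smul, mul_comm, mul_add, add_assoc, add_comm, add_left_comm,
          q.dbl, q.dbl', add_zero, zero_add]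
      simp only [map_smul, map_add]
      rw [h3, smul_smul, inv_mul_cancel₀ hd, one_smul]
    refine ⟨v + q.Z (q.X h), ?_, ?_, fun n hn => ?_⟩
    · rw [map_add, hXv, q.XZ, q.XX, q.ZZ, add_zero]
    · rw [map_add, hYv, q.YZ, q.ZYX, hh, q.dbl]
    · refine hv (n + q.X h) ?_
      rw [map_add, ← hn, add_assoc, q.dbl, add_zero]

end
end QAct


set_option linter.unusedSimpArgs false
set_option linter.unusedSectionVars false

section setup
variable {k : Type} [Field k] [CharP k 2] {G : Type} [Group G] (e : G ≃* QuaternionGroup 2)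

/-- the first generator -/
def gI : G := e.symm (QuaternionGroup.a 1)
/-- the second generator -/
def gJ : G := e.symm (QuaternionGroup.xa 0)
/-- the central involution -/
def gZ : G := e.symm (QuaternionGroup.a 2)

lemma gII : gI e * gI e = gZ e := by
  rw [gI, gZ, ← map_mul]; congr 1
lemma gJJ : gJ e * gJ e = gZ e := by
  rw [gJ, gZ, ← map_mul]; congr 1
lemma gJI : gJ e * gI e = gZ e * (gI e * gJ e) := by
  rw [gJ, gI, gZ, ← map_mul, ← map_mul, ← map_mul]; congr 1
lemma gIZ : gI e * gZ e = gZ e * gI e := by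
  rw [gI, gZ, ← map_mul, ← map_mul]; congr 1
lemma gJZ : gJ e * gZ e = gZ e * gJ e := by
  rw [gJ, gZ, ← map_mul, ← map_mul]; congr 1
lemma gZZ : gZ e * gZ e = 1 := by
  rw [gZ, ← map_mul, ← map_one e.symm]; congr 1

lemma gZ_inv : (gZ e)⁻¹ = gZ e := inv_eq_of_mul_eq_one_left (gZZ e)

lemma g_gen (g : G) : ∃ n : ℕ, g = gI e ^ n ∨ g = gJ e * gI e ^ n := by
  have h : ∀ x : QuaternionGroup 2, ∃ n : Fin 4, x = QuaternionGroup.a 1 ^ (n : ℕ) ∨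
    x = QuaternionGroup.xa 0 * QuaternionGroup.a 1 ^ (n : ℕ) := by decide
  obtain ⟨n, hn | hn⟩ := h (e g)
  · exact ⟨n, Or.inl (by rw [gI, ← map_pow, ← hn, e.symm_apply_apply])⟩
  · exact ⟨n, Or.inr (by rw [gI, gJ, ← map_pow, ← map_mul, ← hn, e.symm_apply_apply])⟩

section rep
variable {V : Type} [AddCommGroup V] [Module k V] (ρ : Representation k G V)

lemma rho_mul (g h : G) (m : V) : ρ g (ρ h m) = ρ (g * h) m := by
  rw [map_mul]; rfl

/-- the operators attached to a representation -/
def qaR : QAct k V where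
  X := ρ (gI e) + 1
  Y := ρ (gJ e) + 1
  Z := ρ (gZ e) + 1
  XX m := by
    have d : ∀ m : V, m + m = 0 := fun m => by
      rw [← two_smul k m, CharTwo.two_eq_zero, zero_smul]
    simp only [LinearMap.add_apply, Module.End.one_apply, map_add, rho_mul, gII]
    rw [add_assoc, ← add_assoc (ρ (gI e) m), d, zero_add]
  YY m := by
    have d : ∀ m : V, m + m = 0 := fun m => by
      rw [← two_smul k m, CharTwo.two_eq_zero, zero_smul]
    simp only [LinearMap.add_apply, Module.End.one_apply, map_add, rho_mul, gJJ]
    rw [add_assoc, ← add_assoc (ρ (gJ e) m), d, zero_add]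
  YX m := by
    have d : ∀ m : V, m + m = 0 := fun m => by
      rw [← two_smul k m, CharTwo.two_eq_zero, zero_smul]
    have d2 : ∀ m : V, (2 : ℤ) • m = 0 := fun m => by rw [two_zsmul, d]
    have d4 : ∀ m : V, (4 : ℤ) • m = 0 := fun m => by
      rw [show (4 : ℤ) = 2 * 2 by norm_num, mul_smul, d2]
    have d6 : ∀ m : V, (6 : ℤ) • m = 0 := fun m => by
      rw [show (6 : ℤ) = 2 * 3 by norm_num, mul_smul, d2]
    have d8 : ∀ m : V, (8 : ℤ) • m = 0 := fun m => by
      rw [show (8 : ℤ) = 2 * 4 by norm_num, mul_smul, d2]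
    simp only [LinearMap.add_apply, Module.End.one_apply, map_add, rho_mul, gJI]
    rw [← sub_eq_zero]
    have d2' : ∀ m : V, (-2 : ℤ) • m = 0 := fun m => by rw [neg_smul, d2, neg_zero]
    have d4' : ∀ m : V, (-4 : ℤ) • m = 0 := fun m => by rw [neg_smul, d4, neg_zero]
    have d6' : ∀ m : V, (-6 : ℤ) • m = 0 := fun m => by rw [neg_smul, d6, neg_zero]
    abel_nf
    simp only [d2, d4, d6, d8, d2', d4', d6', add_zero]
  XZ m := by
    simp only [LinearMap.add_apply, Module.End.one_apply, map_add, rho_mul, gIZ]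
    abel
  YZ m := by
    simp only [LinearMap.add_apply, Module.End.one_apply, map_add, rho_mul, gJZ]
    abel
  ZZ m := by
    have d : ∀ m : V, m + m = 0 := fun m => by
      rw [← two_smul k m, CharTwo.two_eq_zero, zero_smul]
    simp only [LinearMap.add_apply, Module.End.one_apply, map_add, rho_mul, gZZ, map_one]
    rw [add_comm m, d]
  dbl m := by
    rw [← two_smul k m, CharTwo.two_eq_zero, zero_smul]

lemma qaR_X (m : V) : (qaR e ρ).X m = ρ (gI e) m + m := rfl
lemma qaR_Y (m : V) : (qaR e ρ).Y m = ρ (gJ e) m + m := rfl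
lemma qaR_Z (m : V) : (qaR e ρ).Z m = ρ (gZ e) m + m := rfl

lemma rho_Z (m : V) : ρ (gZ e) m = (qaR e ρ).Z m + m := by
  rw [qaR_Z, add_assoc, (qaR e ρ).dbl, add_zero]

lemma rho_fix {m : V} (hX : (qaR e ρ).X m = 0) (hY : (qaR e ρ).Y m = 0) (g : G) : ρ g m = m := by
  have h1 : ρ (gI e) m = m := (qaR e ρ).eq_of_add hX
  have h2 : ρ (gJ e) m = m := (qaR e ρ).eq_of_add hY
  have h3 : ∀ n : ℕ, ρ (gI e ^ n) m = m := fun n => by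
    induction n with
    | zero => simp
    | succ n ih => rw [pow_succ, ← rho_mul, h1, ih]
  obtain ⟨n, rfl | rfl⟩ := g_gen e g
  · exact h3 n
  · rw [← rho_mul, h3, h2]

end rep

/-- operators of an object -/
abbrev qa (M : Rep k G) : QAct k M.V := qaR e M.ρ

/-- morphisms give homomorphisms -/
def homOf {M N : Rep k G} (f : M ⟶ N) : QAct.Hom (qa e M) (qa e N) where
  f := f.hom.toLinearMap
  hX m := by
    change f.hom (M.ρ _ m + m) = N.ρ _ (f.hom m) + f.hom m
    rw [map_add, Rep.hom_comm_apply]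
  hY m := by
    change f.hom (M.ρ _ m + m) = N.ρ _ (f.hom m) + f.hom m
    rw [map_add, Rep.hom_comm_apply]

lemma homOf_f {M N : Rep k G} (f : M ⟶ N) (m : M.V) : (homOf e f).f m = f.hom m := rfl

lemma lin_fix {V W : Type} [AddCommGroup V] [Module k V] [AddCommGroup W] [Module k W]
    {ρ : Representation k G V} {σ : Representation k G W} {f : V →ₗ[k] W}
    (h : ∀ g, ρ.linHom σ g f = f) (g : G) (m : V) : f (ρ g m) = σ g (f m) := by
  conv_lhs => rw [← h g]
  simp [Representation.linHom_apply]

/-- a fixed linear map is a morphism -/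
def morOf {M N : Rep k G} (f : M.V →ₗ[k] N.V) (h : ∀ g m, f (M.ρ g m) = N.ρ g (f m)) : M ⟶ N :=
  Rep.ofHom ⟨f, fun g => LinearMap.ext (h g)⟩

lemma morOf_apply {M N : Rep k G} (f : M.V →ₗ[k] N.V) (h) (m : M.V) : (morOf f h).hom m = f m := rfl

lemma hom_to_rep {M N : Rep k G} (φ : QAct.Hom (qa e M) (qa e N)) :
    ∃ f : M ⟶ N, ∀ m, f.hom m = φ.f m := by
  have hI : ∀ m, φ.f (M.ρ (gI e) m) = N.ρ (gI e) (φ.f m) := fun m => by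
    have h := φ.hX m
    rw [qaR_X, qaR_X, map_add] at h
    exact add_right_cancel h
  have hJ : ∀ m, φ.f (M.ρ (gJ e) m) = N.ρ (gJ e) (φ.f m) := fun m => by
    have h := φ.hY m
    rw [qaR_Y, qaR_Y, map_add] at h
    exact add_right_cancel h
  have hIn : ∀ (n : ℕ) m, φ.f (M.ρ (gI e ^ n) m) = N.ρ (gI e ^ n) (φ.f m) := fun n => by
    induction n with
    | zero => simp
    | succ n ih => intro m; rw [pow_succ, ← rho_mul, ih, hI, rho_mul]
  refine ⟨morOf φ.f fun g m => ?_, fun m => rfl⟩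
  obtain ⟨n, rfl | rfl⟩ := g_gen e g
  · exact hIn n m
  · rw [← rho_mul, hJ, hIn, rho_mul]

/-- exactness -/
lemma ses_of {A P B : Rep k G} (f : A ⟶ P) (g : P ⟶ B) (w : f ≫ g = 0)
    (h : (ShortComplex.mk f g w).ShortExact) :
    ∃ S : QAct.SES (qa e A) (qa e P) (qa e B), S.i = homOf e f ∧ S.g = homOf e g := by
  have := h.mono_f
  have := h.epi_g
  refine ⟨⟨homOf e f, homOf e g, (Rep.mono_iff_injective f).1 h.mono_f,
    (Rep.epi_iff_surjective g).1 h.epi_g, fun a => ?_, fun x hx => ?_⟩, rfl, rfl⟩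
  · have := congrArg (fun t => t.hom a) w
    exact this
  · have hW : ∀ g' : G, LinearMap.ker g.hom.toLinearMap ≤ (LinearMap.ker g.hom.toLinearMap).comap (P.ρ g') := by
      intro g' y hy
      have hy' : g.hom y = 0 := hy
      change g.hom (P.ρ g' y) = 0
      rw [Rep.hom_comm_apply, hy', map_zero]
    let W : Rep k G := Rep.of (P.ρ.subrepresentation (LinearMap.ker g.hom.toLinearMap) hW)
    let j : W ⟶ P := morOf (LinearMap.ker g.hom.toLinearMap).subtype (fun g m => rfl)
    have hj : j ≫ g = 0 := by
      ext m
      exact m.2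
    have hl := h.exact.lift_f j hj
    refine ⟨(h.exact.lift j hj).hom ⟨x, hx⟩, ?_⟩
    have := congrArg (fun t => t.hom ⟨x, hx⟩) hl
    exact this

end setup


set_option linter.unusedSimpArgs false
set_option linter.unusedSectionVars false

namespace QAct
variable {k V : Type} [Field k] [AddCommGroup V] [Module k V]

/-- a contracting homotopy for `Z`, up to the stable part `p` -/
lemma exists_h (q : QAct k V) : ∃ h p : V →ₗ[k] V, (∀ m, m = q.Z (h m) + h (q.Z m) + p m) ∧
    (∀ m, q.Z (p m) = 0) ∧ (∀ m, p (q.Z m) = 0) ∧ (∀ m n, p m = q.Z n → p m = 0) ∧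
    (∀ m, p (p m) = p m) := by
  obtain ⟨s, hs⟩ : ∃ s : V →ₗ[k] V, ∀ m, q.Z (s (q.Z m)) = q.Z m := by
    obtain ⟨r, hr⟩ := LinearMap.exists_rightInverse_of_surjective q.Z.rangeRestrict
      (LinearMap.range_rangeRestrict _)
    obtain ⟨r', hr'⟩ := LinearMap.exists_extend r
    refine ⟨r', fun m => ?_⟩
    have h1 : r' (q.Z m) = r (q.Z.rangeRestrict m) := by
      rw [← hr']; rfl
    rw [h1]
    have h2 := LinearMap.congr_fun hr (q.Z.rangeRestrict m)
    exact congrArg Subtype.val h2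
  let h : V →ₗ[k] V := s ∘ₗ q.Z ∘ₗ s - q.Z ∘ₗ s ∘ₗ s ∘ₗ q.Z ∘ₗ s
  have hh : ∀ m, h m = s (q.Z (s m)) - q.Z (s (s (q.Z (s m)))) := fun m => rfl
  let p : V →ₗ[k] V := LinearMap.id - q.Z ∘ₗ h - h ∘ₗ q.Z
  have hp : ∀ m, p m = m - q.Z (h m) - h (q.Z m) := fun m => rfl
  have e1 : ∀ m, q.Z (h m) = q.Z (s m) := fun m => by
    rw [hh, map_sub, q.ZZ, sub_zero, hs]
  have e2 : ∀ m, q.Z (p m) = 0 := fun m => by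
    rw [hp, map_sub, map_sub, q.ZZ, e1, hs]; simp
  have e3 : ∀ m, p (q.Z m) = 0 := fun m => by
    rw [hp, q.ZZ, e1, hs]; simp
  have e4 : ∀ m n, p m = q.Z n → p m = 0 := fun m n hn => by
    have h1 : q.Z (s (p m)) = p m := by rw [hn, hs]
    rw [← h1, hp, map_sub, map_sub, map_sub, map_sub, e1, hs, hh, map_sub, map_sub, hs, hs]
    simp
  refine ⟨h, p, fun m => by rw [hp]; abel, e2, e3, e4, fun m => ?_⟩
  have h1 : p (p m - m) = q.Z (-h (p m)) + (p m - p m) := by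
    rw [map_sub, hp (p m), e2, map_zero, map_neg]; abel
  rw [sub_self, add_zero] at h1
  have h2 := e4 _ _ h1
  rwa [map_sub, sub_eq_zero] at h2

end QAct

section
variable {k : Type} [Field k] [CharP k 2] {G : Type} [Group G] (e : G ≃* QuaternionGroup 2)
variable {V : Type} [AddCommGroup V] [Module k V] (ρ : Representation k G V)

lemma end_Z (f : V →ₗ[k] V) (m : V) : (qaR e (ρ.linHom ρ)).Z f m =
    (qaR e ρ).Z (f m) + f ((qaR e ρ).Z m) + (qaR e ρ).Z (f ((qaR e ρ).Z m)) := by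
  have h : (qaR e (ρ.linHom ρ)).Z f m = ρ (gZ e) (f (ρ (gZ e) m)) + f m := by
    rw [qaR_Z, LinearMap.add_apply, Representation.linHom_apply, gZ_inv]; rfl
  rw [h, rho_Z e ρ m, rho_Z e ρ, map_add, map_add]
  refine (qaR e ρ).eq_of_add ?_
  abel_nf
  simp only [(qaR e ρ).z2, add_zero]

/-- the elements killed by `Z` commute with `Z` -/
lemma end_comm {f : V →ₗ[k] V} (hf : (qaR e (ρ.linHom ρ)).Z f = 0) (m : V) :
    f ((qaR e ρ).Z m) = (qaR e ρ).Z (f m) := by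
  have h1 := fun m => LinearMap.congr_fun hf m
  simp only [end_Z, LinearMap.zero_apply] at h1
  have h2 := congrArg (qaR e ρ).Z (h1 m)
  simp only [map_add, (qaR e ρ).ZZ, map_zero, zero_add, add_zero] at h2
  have h3 := h1 m
  rw [h2, add_zero] at h3
  exact ((qaR e ρ).eq_of_add h3).symm

/-- decomposition of the elements killed by `Z` -/
lemma end_decomp {f h p : V →ₗ[k] V} (hf : (qaR e (ρ.linHom ρ)).Z f = 0)
    (h1 : ∀ m, m = (qaR e ρ).Z (h m) + h ((qaR e ρ).Z m) + p m)
    (h2 : ∀ m, (qaR e ρ).Z (p m) = 0) (h3 : ∀ m, p ((qaR e ρ).Z m) = 0) :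
    ∃ g, f = (qaR e (ρ.linHom ρ)).Z g + p ∘ₗ f ∘ₗ p := by
  have hc := end_comm e ρ hf
  refine ⟨h ∘ₗ ρ (gZ e) ∘ₗ f + p ∘ₗ f ∘ₗ h ∘ₗ ρ (gZ e), LinearMap.ext fun m => ?_⟩
  have a1 := h1 (f m)
  have a2 := congrArg (fun x => p (f x)) (h1 m)
  simp only [map_add, hc, h3, zero_add] at a2
  rw [LinearMap.add_apply, end_Z]
  simp only [LinearMap.add_apply, LinearMap.comp_apply, rho_Z e ρ, map_add, hc, (qaR e ρ).ZZ,
    h2, h3, map_zero, add_zero, zero_add]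
  refine (qaR e ρ).lc2 a1 a2 ?_
  abel_nf
  simp only [(qaR e ρ).z2, (qaR e ρ).z4, (qaR e ρ).z6, add_zero]

lemma end_zfree (hq : (qaR e ρ).ZFree) : (qaR e (ρ.linHom ρ)).ZFree := by
  intro f hf
  obtain ⟨h, p, h1, h2, h3, h4, h5⟩ := (qaR e ρ).exists_h
  obtain ⟨g, hg⟩ := end_decomp e ρ hf h1 h2 h3
  refine ⟨g, ?_⟩
  have hp : p = 0 := LinearMap.ext fun m => by
    obtain ⟨n, hn⟩ := hq _ (h2 m)
    exact h4 m n hn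
  rw [hp] at hg
  simpa using hg

lemma id_fix (g : G) : ρ.linHom ρ g LinearMap.id = LinearMap.id := by
  ext m
  simp [Representation.linHom_apply]

lemma id_XY : (qaR e (ρ.linHom ρ)).X LinearMap.id = 0 ∧ (qaR e (ρ.linHom ρ)).Y LinearMap.id = 0 := by
  constructor
  · rw [qaR_X, id_fix]; exact (qaR e (ρ.linHom ρ)).dbl _
  · rw [qaR_Y, id_fix]; exact (qaR e (ρ.linHom ρ)).dbl _

/-- the endomorphism algebra of a module with one-dimensional stable socle -/
lemma end_T1 (hq : (qaR e ρ).T1) : (∀ g, LinearMap.id ≠ (qaR e (ρ.linHom ρ)).Z g) ∧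
    ∀ f, (qaR e (ρ.linHom ρ)).Z f = 0 → ∃ g, ∃ c : k,
      f = (qaR e (ρ.linHom ρ)).Z g + c • LinearMap.id := by
  obtain ⟨v, hv1, hv2, hv3⟩ := hq
  obtain ⟨h, p, h1, h2, h3, h4, h5⟩ := (qaR e ρ).exists_h
  refine ⟨fun g hg => ?_, fun f hf => ?_⟩
  · have := LinearMap.congr_fun hg v
    rw [end_Z, hv1] at this
    exact hv2 (g v) (by simpa using this)
  have hpc : ∀ m, ∃ c : k, p m = c • p v := fun m => by
    obtain ⟨n, c, hc⟩ := hv3 (p m) (h2 m)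
    refine ⟨c, ?_⟩
    rw [← h5, hc, map_add, h3, map_smul, zero_add]
  have hid : (qaR e (ρ.linHom ρ)).Z LinearMap.id = 0 := by
    rw [← QAct.XX, (id_XY e ρ).1, map_zero]
  obtain ⟨g, hg⟩ := end_decomp e ρ hf h1 h2 h3
  obtain ⟨g', hg'⟩ := end_decomp e ρ hid h1 h2 h3
  obtain ⟨c, hc⟩ := hpc (f (p v))
  have h6 : p ∘ₗ f ∘ₗ p = c • (p ∘ₗ LinearMap.id ∘ₗ p) := LinearMap.ext fun m => by
    obtain ⟨d, hd⟩ := hpc m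
    simp only [LinearMap.comp_apply, LinearMap.smul_apply, LinearMap.id_apply]
    rw [h5, hd, map_smul, map_smul, hc, smul_comm]
  refine ⟨g - c • g', c, ?_⟩
  conv_lhs => rw [hg, h6]
  conv_rhs => rw [hg']
  rw [map_sub, map_smul, smul_add]
  abel

/-- converse -/
lemma T1_of_end {f0 : V →ₗ[k] V} (h0 : ∀ g, f0 ≠ (qaR e (ρ.linHom ρ)).Z g)
    (hZ0 : (qaR e (ρ.linHom ρ)).Z f0 = 0)
    (hgen : ∀ f, (qaR e (ρ.linHom ρ)).Z f = 0 → ∃ g, ∃ c : k,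
      f = (qaR e (ρ.linHom ρ)).Z g + c • f0) : (qaR e ρ).T1 := by
  obtain ⟨h, p, h1, h2, h3, h4, h5⟩ := (qaR e ρ).exists_h
  obtain ⟨g0, hg0⟩ := end_decomp e ρ hZ0 h1 h2 h3
  obtain ⟨m0, hm0⟩ : ∃ m, p m ≠ 0 := by
    by_contra hcon
    push Not at hcon
    have : p = 0 := LinearMap.ext hcon
    rw [this] at hg0
    exact h0 g0 (by simpa using hg0)
  obtain ⟨φ, hφ⟩ : ∃ φ : Module.Dual k V, φ (p m0) ≠ 0 := by
    by_contra hcon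
    push Not at hcon
    exact hm0 ((Module.forall_dual_apply_eq_zero_iff k (p m0)).1 hcon)
  obtain ⟨lam, hl1, hl2⟩ : ∃ lam : V →ₗ[k] k, lam (p m0) = 1 ∧ ∀ m, lam ((qaR e ρ).Z m) = 0 := by
    refine ⟨(φ (p m0))⁻¹ • (φ ∘ₗ p), ?_, fun m => ?_⟩
    · simp only [LinearMap.smul_apply, LinearMap.comp_apply, h5, smul_eq_mul]
      exact inv_mul_cancel₀ hφ
    · simp only [LinearMap.smul_apply, LinearMap.comp_apply, h3, map_zero, smul_zero]
  have hv : ∀ n, p m0 ≠ (qaR e ρ).Z n := fun n hn => hm0 (h4 m0 n hn)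
  have key : ∀ m, (qaR e ρ).Z m = 0 → ∃ n, ∃ c : k, m = (qaR e ρ).Z n + c • f0 (p m0) := by
    intro m hm
    obtain ⟨g, c, hg⟩ := hgen (lam.smulRight m) (LinearMap.ext fun x => by
      rw [end_Z]
      simp [hl2, hm])
    have h6 := LinearMap.congr_fun hg (p m0)
    rw [LinearMap.add_apply, end_Z, h2] at h6
    refine ⟨g (p m0), c, ?_⟩
    simpa [hl1] using h6
  obtain ⟨n1, c1, hc1⟩ := key _ (h2 m0)
  have hc0 : c1 ≠ 0 := by
    rintro rfl
    exact hv n1 (by simpa using hc1)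
  refine ⟨p m0, h2 m0, hv, fun m hm => ?_⟩
  obtain ⟨n, c, hc⟩ := key m hm
  refine ⟨n - (c / c1) • n1, c / c1, ?_⟩
  have h7 : f0 (p m0) = c1⁻¹ • (p m0 - (qaR e ρ).Z n1) := by
    rw [eq_inv_smul_iff₀ hc0, eq_sub_iff_add_eq, add_comm]; exact hc1.symm
  rw [hc, h7, smul_smul, ← div_eq_mul_inv, smul_sub, map_sub, map_smul]
  abel

end

section
variable {k : Type} [Field k] [CharP k 2] {G : Type} [Group G] (e : G ≃* QuaternionGroup 2)

/-- composition as a homomorphism -/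
def postHom (N : Rep k G) {A B : Rep k G} (f : A ⟶ B) :
    QAct.Hom (qaR e (N.ρ.linHom A.ρ)) (qaR e (N.ρ.linHom B.ρ)) where
  f := LinearMap.compRight k f.hom.toLinearMap
  hX φ := by
    ext m
    have h : f.hom (A.ρ (gI e) (φ (N.ρ (gI e)⁻¹ m)) + φ m) =
      B.ρ (gI e) (f.hom (φ (N.ρ (gI e)⁻¹ m))) + f.hom (φ m) := by
      rw [map_add, Rep.hom_comm_apply]
    exact h
  hY φ := by
    ext m
    have h : f.hom (A.ρ (gJ e) (φ (N.ρ (gJ e)⁻¹ m)) + φ m) =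
      B.ρ (gJ e) (f.hom (φ (N.ρ (gJ e)⁻¹ m))) + f.hom (φ m) := by
      rw [map_add, Rep.hom_comm_apply]
    exact h

lemma postHom_f (N : Rep k G) {A B : Rep k G} (f : A ⟶ B) (φ : N.V →ₗ[k] A.V) (m : N.V) :
    (postHom e N f).f φ m = f.hom (φ m) := rfl

lemma proj_of_zfree (N : Rep k G) (hN : (qa e N).ZFree) : Projective N := by
  obtain ⟨θ, hθ⟩ := (end_zfree e N.ρ hN).fix (id_XY e N.ρ).1 (id_XY e N.ρ).2
  refine ⟨fun {E X} f π hπ => ?_⟩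
  obtain ⟨s, hs⟩ := LinearMap.exists_rightInverse_of_surjective π.hom.toLinearMap
    (LinearMap.range_eq_top.2 ((Rep.epi_iff_surjective π).1 hπ))
  let Q := qaR e (N.ρ.linHom E.ρ)
  let t0 : N.V →ₗ[k] E.V := s ∘ₗ f.hom.toLinearMap ∘ₗ θ
  let T : N.V →ₗ[k] E.V := Q.Z (Q.X (Q.Y t0))
  have hX : Q.X T = 0 := by
    change Q.X (Q.Z _) = 0
    rw [Q.XZ, Q.XX, Q.ZZ]
  have hY : Q.Y T = 0 := by
    change Q.Y (Q.Z _) = 0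
    rw [Q.YZ, Q.ZYX, Q.YY, Q.XZ, Q.ZZ]
  have hfix := rho_fix e (N.ρ.linHom E.ρ) hX hY
  refine ⟨morOf T (lin_fix hfix), ?_⟩
  ext m
  have h1 : (postHom e N π).f T = (postHom e N f).f LinearMap.id := by
    have h2 : (postHom e N π).f t0 = (postHom e N f).f θ :=
      LinearMap.ext fun x => LinearMap.congr_fun hs (f.hom (θ x))
    rw [hθ]
    change (postHom e N π).f (Q.Z (Q.X (Q.Y t0))) = _
    simp only [QAct.Hom.hX, QAct.Hom.hY, QAct.Hom.hZ, Q]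
    rw [h2]
  exact LinearMap.congr_fun h1 m

/-- transversal of the centre -/
def tv : QuaternionGroup 2 → Bool
  | QuaternionGroup.a i => decide (i = 0 ∨ i = 1)
  | QuaternionGroup.xa i => decide (i = 0 ∨ i = 1)

lemma tv_mul : ∀ x, tv (QuaternionGroup.a 2 * x) = !tv x := by decide

/-- the module of functions -/
def FR (L : Type) [AddCommGroup L] [Module k L] : Representation k G (G → L) where
  toFun g :=
    { toFun := fun f x => f (g⁻¹ * x)
      map_add' := fun _ _ => rfl
      map_smul' := fun _ _ => rfl }
  map_one' := by
    ext; simp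
  map_mul' g h := by
    apply LinearMap.ext; intro f; funext x
    simp [mul_assoc]

lemma FR_apply (L : Type) [AddCommGroup L] [Module k L] (g : G) (f : G → L) (x : G) :
    (FR L : Representation k G (G → L)) g f x = f (g⁻¹ * x) := rfl

lemma FR_zfree (L : Type) [AddCommGroup L] [Module k L] :
    (qaR e (FR L : Representation k G (G → L))).ZFree := by
  intro f hf
  have h1 : ∀ x, f (gZ e * x) = f x := fun x => by
    have h := congrFun ((qaR e (FR L : Representation k G (G → L))).eq_of_add
      (a := FR L (gZ e) f) (b := f) hf) x
    rwa [FR_apply, gZ_inv] at h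
  have h2 : ∀ x, tv (e (gZ e * x)) = !tv (e x) := fun x => by
    rw [map_mul, gZ, e.apply_symm_apply, tv_mul]
  refine ⟨fun x => if tv (e x) then f x else 0, ?_⟩
  rw [qaR_Z]
  funext x
  rw [Pi.add_apply, FR_apply, gZ_inv, h2, h1]
  cases tv (e x) <;> simp

/-- the free cover -/
def cov [Fintype G] (M : Rep k G) : Rep.of (FR M.V : Representation k G (G → M.V)) ⟶ M :=
  morOf (∑ x : G, M.ρ x ∘ₗ LinearMap.proj x) (fun g f => by
    simp only [LinearMap.sum_apply, LinearMap.comp_apply, LinearMap.proj_apply, map_sum]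
    refine Fintype.sum_equiv (Equiv.mulLeft g⁻¹) _ _ fun x => ?_
    rw [rho_mul]
    simp [FR_apply])

lemma cov_apply [Fintype G] (M : Rep k G) (f : G → M.V) :
    (cov M).hom f = ∑ x, M.ρ x (f x) := by
  rw [cov, morOf_apply]
  simp

lemma zfree_of_proj [Fintype G] [DecidableEq G] (P : Rep k G) (hP : Projective P) :
    (qa e P).ZFree := by
  have hs : Function.Surjective (cov P).hom := fun m => by
    refine ⟨Pi.single 1 m, ?_⟩
    rw [cov_apply, Finset.sum_eq_single 1]
    · simp
    · intro b _ hb; simp [hb]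
    · simp
  have := (Rep.epi_iff_surjective (cov P)).2 hs
  obtain ⟨s, hs⟩ := hP.factors (𝟙 P) (cov P)
  have hs' : ∀ m, (cov P).hom (s.hom m) = m := fun m => congrArg (fun t => t.hom m) hs
  intro m hm
  obtain ⟨n, hn⟩ := FR_zfree e P.V (s.hom m) (by
    have h := (homOf e s).hZ m
    rw [hm, map_zero] at h
    exact h.symm)
  refine ⟨(cov P).hom n, ?_⟩
  have h := (homOf e (cov P)).hZ n
  have h' : (cov P).hom (s.hom m) = (cov P).hom ((qaR e (FR P.V : Representation k G (G → P.V))).Z n) := by rw [← hn]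
  rw [hs'] at h'
  rw [h']
  exact h

/-- the coinduced embedding -/
def emb (M : Rep k G) : M ⟶ Rep.of (FR M.V : Representation k G (G → M.V)) :=
  morOf (LinearMap.pi fun x => M.ρ x⁻¹) (fun g m => by
    funext x
    change M.ρ x⁻¹ (M.ρ g m) = M.ρ (g⁻¹ * x)⁻¹ m
    rw [rho_mul]; simp)

lemma emb_inj (M : Rep k G) : Function.Injective (emb M).hom := fun a b h => by
  have := congrFun h 1
  change M.ρ 1⁻¹ a = M.ρ 1⁻¹ b at this
  simpa using this

/-- quotient by the image of a morphism -/
def quo {A B : Rep k G} (f : A ⟶ B) : Rep k G :=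
  Rep.of (B.ρ.quotient (LinearMap.range f.hom.toLinearMap) (fun g => by
    rintro _ ⟨a, rfl⟩
    exact ⟨A.ρ g a, Rep.hom_comm_apply f g a⟩))

/-- the projection to the quotient -/
def quoMk {A B : Rep k G} (f : A ⟶ B) : B ⟶ quo f :=
  morOf (LinearMap.range f.hom.toLinearMap).mkQ (fun _ _ => rfl)

lemma quoMk_surj {A B : Rep k G} (f : A ⟶ B) : Function.Surjective (quoMk f).hom :=
  Submodule.mkQ_surjective _

lemma quoMk_ker {A B : Rep k G} (f : A ⟶ B) (x : B.V) : (quoMk f).hom x = 0 ↔ ∃ a, f.hom a = x :=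
  (Submodule.Quotient.mk_eq_zero _)

/-- the exact sequence of the quotient -/
def quoSES {A B : Rep k G} (f : A ⟶ B) (hf : Function.Injective f.hom) :
    QAct.SES (qa e A) (qa e B) (qa e (quo f)) where
  i := homOf e f
  g := homOf e (quoMk f)
  inj := hf
  surj := quoMk_surj f
  zero a := (quoMk_ker f _).2 ⟨a, rfl⟩
  ex x hx := (quoMk_ker f x).1 hx

lemma split {A B : Rep k G} (f : A ⟶ B) (hf : Function.Injective f.hom)
    (h : ∀ b a, (qa e B).Z b = f.hom a → ∃ b' a', b = (qa e B).Z b' + f.hom a') :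
    ∃ C : Rep k G, Projective C ∧ Nonempty (A ⊞ C ≅ B) := by
  let S := quoSES e f hf
  have hC : (qa e (quo f)).ZFree := by
    intro m hm
    obtain ⟨b, rfl⟩ := S.surj m
    rw [← S.g.hZ] at hm
    obtain ⟨a, ha⟩ := S.ex _ hm
    obtain ⟨b', a', hb⟩ := h b a ha.symm
    refine ⟨S.g.f b', ?_⟩
    have h' : S.g.f (S.i.f a') = 0 := S.zero a'
    have h'' : S.g.f b = S.g.f ((qa e B).Z b' + S.i.f a') := congrArg S.g.f hb
    rw [h'', map_add, h', add_zero, S.g.hZ]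
  have hC' := proj_of_zfree e _ hC
  refine ⟨quo f, hC', ?_⟩
  have := (Rep.epi_iff_surjective (quoMk f)).2 (quoMk_surj f)
  obtain ⟨s, hs⟩ := hC'.factors (𝟙 (quo f)) (quoMk f)
  have hs' : ∀ m, (quoMk f).hom (s.hom m) = m := fun m => congrArg (fun t => t.hom m) hs
  have hd : ∀ x, (biprod.desc f s).hom x =
      f.hom ((biprod.fst : A ⊞ quo f ⟶ A).hom x) + s.hom ((biprod.snd : A ⊞ quo f ⟶ _).hom x) := by
    intro x
    have : biprod.desc f s = biprod.fst ≫ f + biprod.snd ≫ s := by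
      rw [biprod.desc_eq]
    rw [this]; rfl
  have hext : ∀ x : (A ⊞ quo f : Rep k G).V, (biprod.fst : A ⊞ quo f ⟶ A).hom x = 0 →
      (biprod.snd : A ⊞ quo f ⟶ _).hom x = 0 → x = 0 := by
    intro x h1 h2
    have h3 := congrArg (fun t => t.hom x) (biprod.total (X := A) (Y := quo f))
    change (biprod.inl : A ⟶ A ⊞ quo f).hom ((biprod.fst : A ⊞ quo f ⟶ A).hom x) +
      (biprod.inr : quo f ⟶ A ⊞ quo f).hom ((biprod.snd : A ⊞ quo f ⟶ _).hom x) = x at h3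
    rw [← h3, h1, h2, map_zero, map_zero, add_zero]
  have hinj : Function.Injective (biprod.desc f s).hom := by
    rw [injective_iff_map_eq_zero]
    intro x hx
    rw [hd] at hx
    have h1 := congrArg (quoMk f).hom hx
    rw [map_add, (quoMk_ker f _).2 ⟨_, rfl⟩, hs', zero_add, map_zero] at h1
    rw [h1, map_zero, add_zero] at hx
    exact hext x (hf (by rw [hx, map_zero])) h1
  have hsurj : Function.Surjective (biprod.desc f s).hom := by
    intro b
    obtain ⟨a, ha⟩ := (quoMk_ker f (b - s.hom ((quoMk f).hom b))).1 (by
      rw [map_sub, hs', sub_self])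
    refine ⟨(biprod.inl : A ⟶ A ⊞ quo f).hom a +
      (biprod.inr : quo f ⟶ A ⊞ quo f).hom ((quoMk f).hom b), ?_⟩
    have h1 := congrArg (fun t => t.hom a) (biprod.inl_desc f s)
    have h2 := congrArg (fun t => t.hom ((quoMk f).hom b)) (biprod.inr_desc f s)
    change (biprod.desc f s).hom ((biprod.inl : A ⟶ A ⊞ quo f).hom a) = f.hom a at h1
    change (biprod.desc f s).hom ((biprod.inr : quo f ⟶ A ⊞ quo f).hom ((quoMk f).hom b)) = s.hom _ at h2
    rw [map_add, h1, h2, ha]; abel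
  have := (Rep.mono_iff_injective _).2 hinj
  have := (Rep.epi_iff_surjective _).2 hsurj
  have := isIso_of_mono_of_epi (biprod.desc f s)
  exact ⟨asIso (biprod.desc f s)⟩

end


section final
variable {k : Type} [Field k] [CharP k 2] {G : Type} [Group G] (e : G ≃* QuaternionGroup 2)

/-- element of a biproduct -/
noncomputable def mkb {A B : Rep k G} (a : A.V) (b : B.V) : (A ⊞ B : Rep k G).V :=
  (biprod.inl : A ⟶ A ⊞ B).hom a + (biprod.inr : B ⟶ A ⊞ B).hom b
/-- first coordinate -/
noncomputable def b1 {A B : Rep k G} (x : (A ⊞ B : Rep k G).V) : A.V := (biprod.fst : A ⊞ B ⟶ A).hom x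
/-- second coordinate -/
noncomputable def b2 {A B : Rep k G} (x : (A ⊞ B : Rep k G).V) : B.V := (biprod.snd : A ⊞ B ⟶ B).hom x

lemma b_ext {A B : Rep k G} {x y : (A ⊞ B : Rep k G).V} (h1 : b1 x = b1 y) (h2 : b2 x = b2 y) :
    x = y := by
  have h3 : ∀ x : (A ⊞ B : Rep k G).V, x = mkb (b1 x) (b2 x) := fun x =>
    (congrArg (fun t => t.hom x) (biprod.total (X := A) (Y := B))).symm
  rw [h3 x, h3 y, h1, h2]

lemma b1_mkb {A B : Rep k G} (a : A.V) (b : B.V) : b1 (mkb a b) = a := by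
  have h1 := congrArg (fun t => t.hom a) (biprod.inl_fst (X := A) (Y := B))
  have h2 := congrArg (fun t => t.hom b) (biprod.inr_fst (X := A) (Y := B))
  change (biprod.fst : A ⊞ B ⟶ A).hom ((biprod.inl : A ⟶ A ⊞ B).hom a) = a at h1
  change (biprod.fst : A ⊞ B ⟶ A).hom ((biprod.inr : B ⟶ A ⊞ B).hom b) = 0 at h2
  rw [b1, mkb, map_add, h1, h2, add_zero]

lemma b2_mkb {A B : Rep k G} (a : A.V) (b : B.V) : b2 (mkb a b) = b := by
  have h1 := congrArg (fun t => t.hom a) (biprod.inl_snd (X := A) (Y := B))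
  have h2 := congrArg (fun t => t.hom b) (biprod.inr_snd (X := A) (Y := B))
  change (biprod.snd : A ⊞ B ⟶ B).hom ((biprod.inl : A ⟶ A ⊞ B).hom a) = 0 at h1
  change (biprod.snd : A ⊞ B ⟶ B).hom ((biprod.inr : B ⟶ A ⊞ B).hom b) = b at h2
  rw [b2, mkb, map_add, h1, h2, zero_add]

lemma b1_add {A B : Rep k G} (x y : (A ⊞ B : Rep k G).V) : b1 (x + y) = b1 x + b1 y := map_add _ _ _
lemma b2_add {A B : Rep k G} (x y : (A ⊞ B : Rep k G).V) : b2 (x + y) = b2 x + b2 y := map_add _ _ _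
lemma b1_zero {A B : Rep k G} : b1 (0 : (A ⊞ B : Rep k G).V) = 0 := map_zero _
lemma b2_zero {A B : Rep k G} : b2 (0 : (A ⊞ B : Rep k G).V) = 0 := map_zero _
lemma b1_smul {A B : Rep k G} (c : k) (x : (A ⊞ B : Rep k G).V) : b1 (c • x) = c • b1 x := map_smul _ _ _
lemma b2_smul {A B : Rep k G} (c : k) (x : (A ⊞ B : Rep k G).V) : b2 (c • x) = c • b2 x := map_smul _ _ _
lemma b1_Z {A B : Rep k G} (x : (A ⊞ B : Rep k G).V) : b1 ((qa e (A ⊞ B)).Z x) = (qa e A).Z (b1 x) :=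
  (homOf e (biprod.fst : A ⊞ B ⟶ A)).hZ x
lemma b2_Z {A B : Rep k G} (x : (A ⊞ B : Rep k G).V) : b2 ((qa e (A ⊞ B)).Z x) = (qa e B).Z (b2 x) :=
  (homOf e (biprod.snd : A ⊞ B ⟶ B)).hZ x

lemma hom_Z {A B : Rep k G} (f : A ⟶ B) (x : A.V) :
    f.hom ((qa e A).Z x) = (qa e B).Z (f.hom x) := (homOf e f).hZ x

lemma i_hi {A B : Rep k G} (i : A ≅ B) (x : A.V) : i.inv.hom (i.hom.hom x) = x :=
  congrArg (fun t => t.hom x) i.hom_inv_id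
lemma i_ih {A B : Rep k G} (i : A ≅ B) (x : B.V) : i.hom.hom (i.inv.hom x) = x :=
  congrArg (fun t => t.hom x) i.inv_hom_id

lemma IsStablyIso.symm' {M N : Rep k G} (h : IsStablyIso M N) : IsStablyIso N M := by
  obtain ⟨P, Q, hP, hQ, ⟨i⟩⟩ := h
  exact ⟨Q, P, hQ, hP, ⟨i.symm⟩⟩

lemma stable_of_good {A B : Rep k G} (hA : (qa e A).T1) (hB : (qa e B).T1)
    (φ : QAct.Hom (qa e A) (qa e B)) (hφ : φ.Good) : IsStablyIso A B := by
  obtain ⟨f, hf⟩ := hom_to_rep e φ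
  obtain ⟨v, hv, hv'⟩ := hφ
  have hfv : ∀ n, f.hom v ≠ (qa e B).Z n := fun n => by rw [hf]; exact hv' n
  have hfv0 : (qa e B).Z (f.hom v) = 0 := by rw [← hom_Z, hv, map_zero]
  have hvn : ∀ n, v ≠ (qa e A).Z n := fun n hn => hfv (f.hom n) (by rw [hn, hom_Z])
  have hgA := hA.gen hv hvn
  have hgB := hB.gen hfv0 hfv
  let E := Rep.of (FR A.V : Representation k G (G → A.V))
  have hE : (qa e E).ZFree := FR_zfree e A.V
  let F : A ⟶ B ⊞ E := biprod.lift f (emb A)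
  have hF1 : ∀ a, b1 (F.hom a) = f.hom a := fun a =>
    congrArg (fun t => t.hom a) (biprod.lift_fst f (emb A))
  have hF2 : ∀ a, b2 (F.hom a) = (emb A).hom a := fun a =>
    congrArg (fun t => t.hom a) (biprod.lift_snd f (emb A))
  obtain ⟨C, hC, ⟨i⟩⟩ := split e F (fun a a' h => emb_inj A (by rw [← hF2, ← hF2, h])) (by
    intro b a h
    have h1 := congrArg b1 h
    have h2 := congrArg b2 h
    rw [b1_Z, hF1] at h1
    rw [b2_Z, hF2] at h2
    have ha : (qa e A).Z a = 0 := emb_inj A (by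
      rw [hom_Z, ← h2, (qa e E).ZZ, map_zero])
    obtain ⟨n, c, rfl⟩ := hgA a ha
    have hc : c = 0 := by
      by_contra hc
      rw [map_add, map_smul, hom_Z] at h1
      refine hfv (c⁻¹ • (b1 b + f.hom n)) ?_
      rw [map_smul, map_add, h1, add_comm, (qa e B).dbl', smul_smul, inv_mul_cancel₀ hc, one_smul]
    subst hc
    rw [zero_smul, add_zero, hom_Z] at h1 h2
    obtain ⟨y, d, hy⟩ := hgB (b1 b + f.hom n) (by rw [map_add, h1, (qa e B).dbl])
    obtain ⟨z, hz⟩ := hE (b2 b + (emb A).hom (n + d • v)) (by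
      rw [map_add, h2, map_add, map_add, map_smul, map_smul, ← hom_Z e _ v, hv, map_zero, smul_zero,
        add_zero, (qa e E).dbl])
    refine ⟨mkb y z, n + d • v, b_ext ?_ ?_⟩
    · rw [b1_add, b1_Z, b1_mkb, hF1, map_add, map_smul, add_comm (f.hom n), ← add_assoc, ← hy,
        add_assoc, (qa e B).dbl, add_zero]
    · rw [b2_add, b2_Z, b2_mkb, hF2, ← hz, add_assoc, (qa e E).dbl, add_zero])
  exact ⟨C, E, hC, proj_of_zfree e E hE, ⟨i⟩⟩

lemma inj_of_stable [Fintype G] [DecidableEq G] {M N : Rep k G} (h : IsStablyIso M N) :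
    ∃ φ : QAct.Hom (qa e M) (qa e N), φ.Inj := by
  obtain ⟨P, Q, hP, hQ, ⟨i⟩⟩ := h
  refine ⟨homOf e ((biprod.inl : M ⟶ M ⊞ P) ≫ i.hom ≫ (biprod.fst : N ⊞ Q ⟶ N)), ?_⟩
  rintro v hv ⟨n, hn⟩
  have hn' : b1 (i.hom.hom (mkb v (0 : P.V))) = (qa e N).Z n := by
    rw [← hn, mkb, map_zero, add_zero]; rfl
  have hw : (qa e (M ⊞ P)).Z (mkb v 0) = 0 := b_ext (by rw [b1_Z, b1_mkb, hv, b1_zero])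
    (by rw [b2_Z, b2_mkb, map_zero, b2_zero])
  obtain ⟨q, hq⟩ := zfree_of_proj e Q hQ (b2 (i.hom.hom (mkb v (0 : P.V)))) (by
    rw [← b2_Z, ← hom_Z, hw, map_zero, b2_zero])
  have h3 : i.hom.hom (mkb v (0 : P.V)) = (qa e (N ⊞ Q)).Z (mkb n q) := b_ext
    (by rw [b1_Z, b1_mkb, hn']) (by rw [b2_Z, b2_mkb, hq])
  have h4 := congrArg i.inv.hom h3
  rw [i_hi, hom_Z] at h4
  refine ⟨b1 (i.inv.hom (mkb n q)), ?_⟩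
  rw [← b1_Z, ← h4, b1_mkb]

lemma triv_Z (c : k) : (qa e (Rep.trivial k G k)).Z c = 0 := by
  change c + c = 0
  exact CharTwo.add_self_eq_zero c
lemma triv_X (c : k) : (qa e (Rep.trivial k G k)).X c = 0 := by
  change c + c = 0
  exact CharTwo.add_self_eq_zero c
lemma triv_Y (c : k) : (qa e (Rep.trivial k G k)).Y c = 0 := by
  change c + c = 0
  exact CharTwo.add_self_eq_zero c

lemma T1_of_endotrivial [Fintype G] [DecidableEq G] {M : Rep k G} (h : IsEndotrivial M) :
    (qa e M).T1 := by
  obtain ⟨_, P, hP, ⟨i⟩⟩ := h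
  have hPz := zfree_of_proj e P hP
  let T := Rep.trivial k G k
  let w : (T ⊞ P : Rep k G).V := mkb (A := T) (1 : k) (0 : P.V)
  have hw : (qa e (T ⊞ P)).Z w = 0 := b_ext (by rw [b1_Z, b1_mkb, b1_zero]; exact triv_Z e _)
    (by rw [b2_Z, b2_mkb, map_zero, b2_zero])
  refine T1_of_end e M.ρ (f0 := i.inv.hom w) ?_ ?_ ?_
  · intro g hg
    have h1 := congrArg i.hom.hom hg
    rw [i_ih] at h1
    have h2 : w = (qa e (T ⊞ P)).Z (i.hom.hom g) := h1.trans (hom_Z e i.hom g)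
    have h3 := congrArg b1 h2
    rw [b1_Z, b1_mkb] at h3
    exact one_ne_zero (α := k) (h3.trans (triv_Z e _))
  · have := hom_Z e i.inv w
    rw [hw, map_zero] at this
    exact this.symm
  · intro f hf
    have h1 : (qa e (T ⊞ P)).Z (i.hom.hom f) = 0 := by
      rw [← hom_Z]
      exact (congrArg i.hom.hom hf).trans (map_zero _)
    obtain ⟨p, hp⟩ := hPz (b2 (i.hom.hom f)) (by rw [← b2_Z, h1, b2_zero])
    have h2 : i.hom.hom f = (qa e (T ⊞ P)).Z (mkb (A := T) (0 : k) p) +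
        (show k from b1 (i.hom.hom f)) • w := by
      refine b_ext ?_ ?_
      · rw [b1_add, b1_Z, b1_mkb, b1_smul, b1_mkb]
        change _ = (qa e (Rep.trivial k G k)).Z (0 : k) + _
        rw [triv_Z, zero_add]
        exact (mul_one (b1 (i.hom.hom f) : k)).symm
      · rw [b2_add, b2_Z, b2_mkb, b2_smul, b2_mkb, smul_zero, add_zero, hp]
    refine ⟨i.inv.hom (mkb (A := T) (0 : k) p), (show k from b1 (i.hom.hom f)), ?_⟩
    have h3 := congrArg i.inv.hom h2
    rw [i_hi, map_add, map_smul, hom_Z] at h3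
    exact h3

lemma endotrivial_of_T1 {M : Rep k G} (hfd : FiniteDimensional k M.V) (h : (qa e M).T1) :
    IsEndotrivial M := by
  obtain ⟨h1, h2⟩ := end_T1 e M.ρ h
  let B := Rep.of (M.ρ.linHom M.ρ)
  let f : Rep.trivial k G k ⟶ B :=
    morOf (LinearMap.toSpanSingleton k (M.V →ₗ[k] M.V) LinearMap.id) (fun g c => by
      change c • LinearMap.id = M.ρ.linHom M.ρ g (c • LinearMap.id)
      rw [map_smul, id_fix])
  have hf : ∀ c : k, f.hom c = (c • LinearMap.id : M.V →ₗ[k] M.V) := fun c => rfl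
  obtain ⟨C, hC, ⟨i⟩⟩ := split e f (by
    refine (injective_iff_map_eq_zero _).2 fun c hc => ?_
    by_contra hc0
    refine h1 0 ?_
    have h3 : (c • LinearMap.id : M.V →ₗ[k] M.V) = 0 := hc
    have h4 : (LinearMap.id : M.V →ₗ[k] M.V) = 0 := by
      have := congrArg (fun t => (c : k)⁻¹ • t) h3
      dsimp only at this
      rwa [smul_smul, inv_mul_cancel₀ hc0, one_smul, smul_zero] at this
    rw [map_zero, h4]) (by
    intro b c h
    have h3 : (qaR e (M.ρ.linHom M.ρ)).Z b = ((c : k) • LinearMap.id : M.V →ₗ[k] M.V) := h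
    have hc : (c : k) = 0 := by
      by_contra hc
      refine h1 ((c : k)⁻¹ • b) ?_
      rw [map_smul, h3, smul_smul, inv_mul_cancel₀ hc, one_smul]
    have h4 : (qaR e (M.ρ.linHom M.ρ)).Z b = 0 := by rw [h3, hc, zero_smul]
    obtain ⟨g, d, hg⟩ := h2 b h4
    exact ⟨g, d, hg⟩)
  exact ⟨hfd, C, hC, ⟨i.symm⟩⟩

section triv
variable {M : Rep k G}

lemma iso_zero (i : M ≅ Rep.trivial k G k) {m : M.V} (h : i.hom.hom m = 0) : m = 0 := by
  rw [← i_hi i m, h, map_zero]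

lemma isoX (i : M ≅ Rep.trivial k G k) (m : M.V) : (qa e M).X m = 0 := iso_zero i (by
  have := (homOf e i.hom).hX m
  exact this.trans (triv_X e _))
lemma isoY (i : M ≅ Rep.trivial k G k) (m : M.V) : (qa e M).Y m = 0 := iso_zero i (by
  have := (homOf e i.hom).hY m
  exact this.trans (triv_Y e _))
lemma isoZ (i : M ≅ Rep.trivial k G k) (m : M.V) : (qa e M).Z m = 0 := by rw [← (qa e M).XX, isoX e i]

/-- generator -/
def iso1 (i : M ≅ Rep.trivial k G k) : M.V := i.inv.hom (1 : k)

lemma iso1_ne (i : M ≅ Rep.trivial k G k) : iso1 i ≠ 0 := fun h => by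
  have h1 := congrArg i.hom.hom h
  rw [iso1, i_ih, map_zero] at h1
  exact one_ne_zero (α := k) h1

lemma iso1_gen (i : M ≅ Rep.trivial k G k) (m : M.V) : ∃ c : k, m = c • iso1 i := by
  refine ⟨(i.hom.hom m : k), ?_⟩
  have h : i.inv.hom (i.hom.hom m) = i.inv.hom ((i.hom.hom m : k) • (1 : k)) := by
    congr 1; exact (mul_one (i.hom.hom m : k)).symm
  rw [i_hi] at h
  rw [iso1]
  exact h.trans (map_smul _ _ _)

lemma iso_T1 (i : M ≅ Rep.trivial k G k) : (qa e M).T1 := ⟨iso1 i, isoZ e i _, fun n => by rw [isoZ e i]; exact iso1_ne i,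
  fun m _ => by
    obtain ⟨c, hc⟩ := iso1_gen i m
    exact ⟨0, c, by rw [map_zero, zero_add]; exact hc⟩⟩

lemma iso_F0 (i : M ≅ Rep.trivial k G k) : (qa e M).F0 := ⟨iso1 i, isoX e i _, isoY e i _,
  fun n => by rw [isoZ e i]; exact iso1_ne i⟩

lemma iso_Ty1 (i : M ≅ Rep.trivial k G k) : (qa e M).Ty1 := ⟨iso1 i, isoX e i _, fun n => by rw [isoZ e i]; exact iso1_ne i⟩

lemma good_of_F0 (i : M ≅ Rep.trivial k G k) {N : Rep k G} (h : (qa e N).F0) :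
    ∃ φ : QAct.Hom (qa e M) (qa e N), φ.Good := by
  obtain ⟨v, h1, h2, h3⟩ := h
  let f : Rep.trivial k G k ⟶ N := morOf (LinearMap.toSpanSingleton k N.V v) (fun g c => by
    change c • v = N.ρ g (c • v)
    rw [map_smul, rho_fix e N.ρ h1 h2])
  refine ⟨homOf e (i.hom ≫ f), iso1 i, isoZ e i _, fun n hn => h3 n ?_⟩
  rw [← hn]
  change v = f.hom (i.hom.hom (i.inv.hom (1 : k)))
  rw [i_ih]
  exact (one_smul k v).symm

end triv

lemma iso_F1 {M P M' : Rep k G} (i : M ≅ Rep.trivial k G k)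
    (S : QAct.SES (qa e M') (qa e P) (qa e M)) (hp : (qa e P).ZFree) : (qa e M').F1 := by
  obtain ⟨p, hp0⟩ := S.surj (iso1 i)
  obtain ⟨a, ha⟩ := S.ex ((qa e P).X p) (by rw [S.g.hX]; exact isoX e i _)
  obtain ⟨b, hb⟩ := S.ex ((qa e P).Y p) (by rw [S.g.hY]; exact isoY e i _)
  obtain ⟨c, hc⟩ := S.ex ((qa e P).Z p) (by rw [S.g.hZ]; exact isoZ e i _)
  refine ⟨a, b, c, S.inj ?_, S.inj ?_, S.inj ?_, S.inj ?_, fun n hn => ?_⟩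
  · rw [S.i.hX, ha, hc, QAct.XX]
  · rw [S.i.hY, hb, hc, QAct.YY]
  · rw [S.i.hZ, hc, QAct.ZZ, map_zero]
  · simp only [map_add, S.i.hX, S.i.hY, ha, hb, hc]
    rw [QAct.YX, QAct.XZ, QAct.YZ, QAct.YZ, QAct.ZYX]
    rw [← QAct.XZ, ← QAct.YZ]
    simp only [QAct.XZ, QAct.YZ]
    simp only [← add_assoc, (qa e P).dbl, zero_add]
  · have h1 := congrArg S.i.f hn
    rw [hc, S.i.hZ] at h1
    obtain ⟨y, hy⟩ := hp (p + S.i.f n) (by rw [map_add, h1, (qa e P).dbl])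
    have h2 := congrArg S.g.f hy
    rw [map_add, S.zero, hp0, add_zero, S.g.hZ] at h2
    exact iso1_ne i (h2.trans (isoZ e i _))

lemma shift_rep {A P A' N : Rep k G} (hP : Projective P) (f : A' ⟶ P) (g : P ⟶ A) (w : f ≫ g = 0)
    (h : (ShortComplex.mk f g w).ShortExact)
    (φ : QAct.Hom (qa e A) (qa e (quo (emb N)))) (hφ : φ.Good) :
    ∃ φ' : QAct.Hom (qa e A') (qa e N), φ'.Good := by
  obtain ⟨S, h1, h2⟩ := ses_of e f g w h
  obtain ⟨F, hF⟩ := hom_to_rep e φ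
  have := (Rep.epi_iff_surjective (quoMk (emb N))).2 (quoMk_surj (emb N))
  obtain ⟨s, hs⟩ := hP.factors (g ≫ F) (quoMk (emb N))
  refine S.shift (quoSES e (emb N) (emb_inj N)) (FR_zfree e N.V) φ hφ (homOf e s) fun x => ?_
  rw [h2, homOf_f, ← hF]
  exact congrArg (fun t => t.hom x) hs

end final


/-- Let `k` be a field of characteristic `2` with no primitive cube root of unity and
`G = Q_8` (`QuaternionGroup 2`). If `M 0` is the trivial module and each `M (i+1)` is a
syzygy of `M i` (i.e. there are short exact sequences `0 → M (i+1) → P i → M i → 0` with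
`P i` finite-dimensional projective), then the `M i` are pairwise non-stably-isomorphic
endotrivial modules and every endotrivial module is stably isomorphic to some `M i`;
hence `T(Q_8) = Pic(StMod(kQ_8))` is cyclic of order `4`. -/
theorem endotrivial_group_of_quaternion_no_cube_root
    (k : Type) [Field k] [CharP k 2] (hk : ∀ ω : k, ω ^ 3 = 1 → ω = 1)
    (G : Type) [Group G] (e : G ≃* QuaternionGroup 2)
    (M : Fin 4 → Rep k G)
    (hM0 : Nonempty (M 0 ≅ Rep.trivial k G k))
    (hseq : ∀ i : Fin 3, ∃ (P : Rep k G) (_ : Projective P) (_ : FiniteDimensional k P.V)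
      (f : M i.succ ⟶ P) (g : P ⟶ M i.castSucc) (w : f ≫ g = 0),
      (ShortComplex.mk f g w).ShortExact) :
    (∀ i : Fin 4, IsEndotrivial (M i)) ∧
      (∀ i j : Fin 4, i ≠ j → ¬ IsStablyIso (M i) (M j)) ∧
      (∀ N : Rep k G, IsEndotrivial N → ∃ i : Fin 4, IsStablyIso N (M i)) := by
  classical
  haveI : Fintype G := Fintype.ofEquiv _ e.symm.toEquiv
  obtain ⟨i0⟩ := hM0
  obtain ⟨P0, hP0, fP0, f0, g0, w0, s0⟩ := hseq 0
  obtain ⟨P1, hP1, fP1, f1, g1, w1, s1⟩ := hseq 1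
  obtain ⟨P2, hP2, fP2, f2, g2, w2, s2⟩ := hseq 2
  change M 1 ⟶ P0 at f0
  change P0 ⟶ M 0 at g0
  change M 2 ⟶ P1 at f1
  change P1 ⟶ M 1 at g1
  change M 3 ⟶ P2 at f2
  change P2 ⟶ M 2 at g2
  obtain ⟨S0, -, -⟩ := ses_of e f0 g0 w0 s0
  obtain ⟨S1, -, -⟩ := ses_of e f1 g1 w1 s1
  obtain ⟨S2, -, -⟩ := ses_of e f2 g2 w2 s2
  have z0 := zfree_of_proj e P0 hP0
  have z1 := zfree_of_proj e P1 hP1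
  have z2 := zfree_of_proj e P2 hP2
  have t0 := iso_T1 e i0
  have t1 := S0.T1_down z0 t0
  have t2 := S1.T1_down z1 t1
  have t3 := S2.T1_down z2 t2
  have y0 := iso_Ty1 e i0
  have y1 : ¬ (qa e (M 1)).Ty1 := S0.not_both z0 t0 y0
  have y2 : (qa e (M 2)).Ty1 := (S1.one_of t1 z1).resolve_left y1
  have y3 : ¬ (qa e (M 3)).Ty1 := S2.not_both z2 t2 y2
  have n2 : ¬ (qa e (M 2)).F0 := S0.not_F0 S1 z0 z1 (isoX e i0) (isoY e i0)
  have k0 := iso_F0 e i0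
  have k1 : (qa e (M 1)).F1 := iso_F1 e i0 S0 z0
  have k3 : ¬ (qa e (M 3)).F1 := fun h => n2 (S2.F1_F0 z2 h)
  have d0 : FiniteDimensional k (M 0).V := by
    refine Module.Finite.of_surjective (LinearMap.toSpanSingleton k (M 0).V (iso1 i0)) fun m => ?_
    obtain ⟨c, hc⟩ := iso1_gen i0 m
    exact ⟨c, hc.symm⟩
  have d1 : FiniteDimensional k (M 1).V := Module.Finite.of_injective S0.i.f S0.inj
  have d2 : FiniteDimensional k (M 2).V := Module.Finite.of_injective S1.i.f S1.inj
  have d3 : FiniteDimensional k (M 3).V := Module.Finite.of_injective S2.i.f S2.inj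
  refine ⟨?_, ?_, ?_⟩
  · intro i
    fin_cases i
    · exact endotrivial_of_T1 e d0 t0
    · exact endotrivial_of_T1 e d1 t1
    · exact endotrivial_of_T1 e d2 t2
    · exact endotrivial_of_T1 e d3 t3
  · have n01 : ¬ IsStablyIso (M 0) (M 1) := fun h => by
      obtain ⟨φ, hφ⟩ := inj_of_stable e h
      exact y1 (hφ.Ty1 y0)
    have n02 : ¬ IsStablyIso (M 0) (M 2) := fun h => by
      obtain ⟨φ, hφ⟩ := inj_of_stable e h
      exact n2 (hφ.F0 k0)
    have n03 : ¬ IsStablyIso (M 0) (M 3) := fun h => by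
      obtain ⟨φ, hφ⟩ := inj_of_stable e h
      exact y3 (hφ.Ty1 y0)
    have n12 : ¬ IsStablyIso (M 2) (M 1) := fun h => by
      obtain ⟨φ, hφ⟩ := inj_of_stable e h
      exact y1 (hφ.Ty1 y2)
    have n13 : ¬ IsStablyIso (M 1) (M 3) := fun h => by
      obtain ⟨φ, hφ⟩ := inj_of_stable e h
      exact k3 (hφ.F1 k1)
    have n23 : ¬ IsStablyIso (M 2) (M 3) := fun h => by
      obtain ⟨φ, hφ⟩ := inj_of_stable e h
      exact y3 (hφ.Ty1 y2)
    intro i j hij h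
    have h' := h.symm'
    fin_cases i <;> fin_cases j <;>
      first
        | exact hij rfl
        | exact n01 h
        | exact n02 h
        | exact n03 h
        | exact n12 h
        | exact n13 h
        | exact n23 h
        | exact n01 h'
        | exact n02 h'
        | exact n03 h'
        | exact n12 h'
        | exact n13 h'
        | exact n23 h'
  · intro N hN
    have u0 := T1_of_endotrivial e hN
    let N1 := quo (emb N)
    let N2 := quo (emb N1)
    let N3 := quo (emb N2)
    let R0 : QAct.SES (qa e N) _ (qa e N1) := quoSES e (emb N) (emb_inj N)
    let R1 : QAct.SES (qa e N1) _ (qa e N2) := quoSES e (emb N1) (emb_inj N1)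
    let R2 : QAct.SES (qa e N2) _ (qa e N3) := quoSES e (emb N2) (emb_inj N2)
    have v0 := FR_zfree (k := k) e N.V
    have v1 := FR_zfree (k := k) e N1.V
    have v2 := FR_zfree (k := k) e N2.V
    have u1 : (qa e N1).T1 := R0.T1_up v0 u0
    by_cases hy : (qa e N).Ty1
    · rcases QAct.ty1_cases hk u0 hy with h | h
      · obtain ⟨φ, hφ⟩ := good_of_F0 e i0 h
        exact ⟨0, (stable_of_good e t0 u0 φ hφ).symm'⟩
      · obtain ⟨φ, hφ⟩ := good_of_F0 e i0 (R1.F1_F0 v1 (R0.F2_F1 v0 h))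
        obtain ⟨φ, hφ⟩ := shift_rep e hP0 f0 g0 w0 s0 φ hφ
        obtain ⟨φ, hφ⟩ := shift_rep e hP1 f1 g1 w1 s1 φ hφ
        exact ⟨2, (stable_of_good e t2 u0 φ hφ).symm'⟩
    · have hy1 : (qa e N1).Ty1 := (R0.one_of u1 v0).resolve_right hy
      rcases QAct.ty1_cases hk u1 hy1 with h | h
      · obtain ⟨φ, hφ⟩ := good_of_F0 e i0 h
        obtain ⟨φ, hφ⟩ := shift_rep e hP0 f0 g0 w0 s0 φ hφ
        exact ⟨1, (stable_of_good e t1 u0 φ hφ).symm'⟩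
      · obtain ⟨φ, hφ⟩ := good_of_F0 e i0 (R2.F1_F0 v2 (R1.F2_F1 v1 h))
        obtain ⟨φ, hφ⟩ := shift_rep e hP0 f0 g0 w0 s0 φ hφ
        obtain ⟨φ, hφ⟩ := shift_rep e hP1 f1 g1 w1 s1 φ hφ
        obtain ⟨φ, hφ⟩ := shift_rep e hP2 f2 g2 w2 s2 φ hφ
        exact ⟨3, (stable_of_good e t3 u0 φ hφ).symm'⟩
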